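/- Let κ be a partition with n distinct parts κ_1>κ_2>⋯>κ_n≥0. For σ∈S_n let σκ denote the composition with (σκ)_i = κ_{σ^{−1}(i)}. Assume the non-symmetric Macdonald polynomials E_{σκ} exist for all σ∈S_n and the q-antisymmetric Macdonald polynomial S_κ exists. Then S_κ = Σ_{σ∈S_n} (−t)^{−l(σ)}·(d_{σκ}(q,t)/d_κ(q,t))·E_{σκ}. -/

import Mathlib

/- STATEMENT 8: for a partition κ with n distinct parts,
S_κ = Σ_{σ∈S_n} (−t)^{−l(σ)}·(d_{σκ}(q,t)/d_κ(q,t))·E_{σκ}. -/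

open Finset MvPolynomial

namespace Stmt8

/-- leg colength l'_η(i) -/
def legCo (n : ℕ) (η : Fin n → ℕ) (i : Fin n) : ℕ :=
  (univ.filter fun k => k < i ∧ η i ≤ η k).card +
  (univ.filter fun k => i < k ∧ η i < η k).card

/-- leg length l(s) of the node s = (i,j) -/
def leg (n : ℕ) (η : Fin n → ℕ) (i : Fin n) (j : ℕ) : ℕ :=
  (univ.filter fun k => i < k ∧ j ≤ η k ∧ η k ≤ η i).card +
  (univ.filter fun k => k < i ∧ j ≤ η k + 1 ∧ η k + 1 ≤ η i).card

/-- The field K = ℚ(q,t). -/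
abbrev K : Type := FractionRing (MvPolynomial (Fin 2) ℚ)

noncomputable def q : K := algebraMap (MvPolynomial (Fin 2) ℚ) K (X 0)
noncomputable def t : K := algebraMap (MvPolynomial (Fin 2) ℚ) K (X 1)

/-- The polynomial ring K[x_1,…,x_n]. -/
abbrev P (n : ℕ) : Type := MvPolynomial (Fin n) K

/-- the automorphism s_k exchanging x_k and x_{k+1} (0-indexed; identity out of range) -/
noncomputable def sOp (n : ℕ) (k : ℕ) : P n →ₗ[K] P n :=
  if h : k + 1 < n then
    (rename (Equiv.swap (⟨k, Nat.lt_of_succ_lt h⟩ : Fin n) ⟨k + 1, h⟩)).toLinearMap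
  else LinearMap.id

/-- τ_1 : x_1 ↦ qv·x_1 (the first variable is 0-indexed) -/
noncomputable def tauOp (n : ℕ) (qv : K) : P n →ₗ[K] P n :=
  (aeval (fun j : Fin n => if (j : ℕ) = 0 then C qv * X j else X j)).toLinearMap

/-- ω := s_{n−1}⋯s_2 s_1 τ_1 -/
noncomputable def omegaOp (n : ℕ) (qv : K) : P n →ₗ[K] P n :=
  (List.range (n - 1)).foldl (fun acc k => sOp n k ∘ₗ acc) (tauOp n qv)

/-- The defining property of the Demazure–Lustig operators T_k (0-indexed), for the
parameter value tv: (x_k − x_{k+1})·(T_k f) = (x_k − x_{k+1})·tv·f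
+ (tv·x_k − x_{k+1})·(s_k f − f), i.e. T_k f is the polynomial quotient from the usual
definition. -/
def IsDL (n : ℕ) (tv : K) (T : ℕ → P n →ₗ[K] P n) : Prop :=
  ∀ k, ∀ hk : k + 1 < n, ∀ f : P n,
    (X (⟨k, Nat.lt_of_succ_lt hk⟩ : Fin n) - X ⟨k + 1, hk⟩) * T k f =
      (X (⟨k, Nat.lt_of_succ_lt hk⟩ : Fin n) - X ⟨k + 1, hk⟩) * (C tv * f) +
      (C tv * X (⟨k, Nat.lt_of_succ_lt hk⟩ : Fin n) - X ⟨k + 1, hk⟩) * (sOp n k f - f)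

/-- T_k⁻¹ = tv⁻¹ − 1 + tv⁻¹ T_k -/
noncomputable def Tinv (n : ℕ) (tv : K) (T : ℕ → P n →ₗ[K] P n) (k : ℕ) : P n →ₗ[K] P n :=
  tv⁻¹ • LinearMap.id - LinearMap.id + tv⁻¹ • T k

/-- The Cherednik operator Y_i (0-indexed i):
Y_i = tv^{i+1−n}·T_i⋯T_{n−2}·ω·T_0⁻¹⋯T_{i−1}⁻¹. -/
noncomputable def Yop (n : ℕ) (qv tv : K) (T : ℕ → P n →ₗ[K] P n) (i : Fin n) :
    P n →ₗ[K] P n :=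
  (tv ^ (n - 1 - (i : ℕ)))⁻¹ •
    (((List.range' (i : ℕ) (n - 1 - (i : ℕ))).foldr (fun k acc => T k ∘ₗ acc) LinearMap.id) ∘ₗ
      omegaOp n qv ∘ₗ
      ((List.range (i : ℕ)).foldr (fun k acc => Tinv n tv T k ∘ₗ acc) LinearMap.id))

/-- the decreasing rearrangement η⁺ of η -/
noncomputable def sortDesc (n : ℕ) (η : Fin n → ℕ) : Fin n → ℕ :=
  fun i => η (Tuple.sort η i.rev)

/-- dominance order on n-tuples (of equal sum) -/
def domLE (n : ℕ) (ν μ : Fin n → ℕ) : Prop :=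
  (∑ i, ν i = ∑ i, μ i) ∧
  ∀ p : Fin n, ∑ i ∈ univ.filter (· ≤ p), ν i ≤ ∑ i ∈ univ.filter (· ≤ p), μ i

def domLT (n : ℕ) (ν μ : Fin n → ℕ) : Prop := domLE n ν μ ∧ ν ≠ μ

/-- the order ≺ : ν ≺ η iff ν⁺ < η⁺, or ν⁺ = η⁺ and ν < η (dominance order) -/
noncomputable def prec (n : ℕ) (ν η : Fin n → ℕ) : Prop :=
  domLT n (sortDesc n ν) (sortDesc n η) ∨ (sortDesc n ν = sortDesc n η ∧ domLT n ν η)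

/-- E is the non-symmetric Macdonald polynomial for the composition η (with parameters
qv, tv and Demazure–Lustig operators T): it has the triangular form
E = x^η + Σ_{ν≺η} b_{ην} x^ν and satisfies Y_i E = qv^{η_i}·tv^{−l'_η(i)}·E for all i. -/
noncomputable def IsNSMac (n : ℕ) (qv tv : K) (T : ℕ → P n →ₗ[K] P n)
    (η : Fin n → ℕ) (E : P n) : Prop :=
  coeff (Finsupp.equivFunOnFinite.symm η) E = 1 ∧
  (∀ ν : Fin n →₀ ℕ, coeff ν E ≠ 0 → (ν : Fin n → ℕ) = η ∨ prec n (ν : Fin n → ℕ) η) ∧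
  ∀ i : Fin n, Yop n qv tv T i E = (qv ^ η i / tv ^ legCo n η i) • E

/-- the adjacent transposition s_k as a permutation (identity out of range, 0-indexed) -/
def sPerm (n : ℕ) (k : ℕ) : Equiv.Perm (Fin n) :=
  if h : k + 1 < n then Equiv.swap ⟨k, Nat.lt_of_succ_lt h⟩ ⟨k + 1, h⟩ else 1

/-- the length l(σ) of a permutation, i.e. its number of inversions -/
def inversions {n : ℕ} (σ : Equiv.Perm (Fin n)) : ℕ :=
  (univ.filter fun p : Fin n × Fin n => p.1 < p.2 ∧ σ p.2 < σ p.1).card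

/-- The defining property of σ ↦ T_σ: T_1 = id and T_{σ·s_k} = T_σ ∘ T_k whenever
l(σ·s_k) = l(σ)+1; by the braid relations this determines T_σ = T_{i_1}⋯T_{i_p} for any
reduced word σ = s_{i_1}⋯s_{i_p}. -/
def IsTsigma (n : ℕ) (T : ℕ → P n →ₗ[K] P n)
    (Tw : Equiv.Perm (Fin n) → P n →ₗ[K] P n) : Prop :=
  Tw 1 = LinearMap.id ∧
  ∀ σ : Equiv.Perm (Fin n), ∀ k, k + 1 < n →
    inversions (σ * sPerm n k) = inversions σ + 1 →
    Tw (σ * sPerm n k) = Tw σ ∘ₗ T k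

/-- U⁺ := Σ_σ T_σ -/
noncomputable def Uplus (n : ℕ) (Tw : Equiv.Perm (Fin n) → P n →ₗ[K] P n) :
    P n →ₗ[K] P n := ∑ σ : Equiv.Perm (Fin n), Tw σ

/-- U⁻ := Σ_σ (−tv)^{−l(σ)} T_σ -/
noncomputable def Uminus (n : ℕ) (tv : K) (Tw : Equiv.Perm (Fin n) → P n →ₗ[K] P n) :
    P n →ₗ[K] P n := ∑ σ : Equiv.Perm (Fin n), ((-tv) ^ inversions σ)⁻¹ • Tw σ

/-- the monomial x^η -/
noncomputable def xmon (n : ℕ) (η : Fin n → ℕ) : P n :=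
  monomial (Finsupp.equivFunOnFinite.symm η) 1

/-- S is the q-antisymmetric Macdonald polynomial for the partition-with-distinct-parts κ:
it is q-antisymmetric (T_k S = −S), of the form m'_κ + Σ_{μ<κ} v_{κμ} m'_μ with
m'_μ := U⁻ x^μ, and satisfies (Σ_i Y_i) S = (Σ_i qv^{κ_i}·tv^{1−i}) S. -/
noncomputable def IsQASMac (n : ℕ) (qv tv : K) (T : ℕ → P n →ₗ[K] P n)
    (Tw : Equiv.Perm (Fin n) → P n →ₗ[K] P n) (κ : Fin n → ℕ) (S : P n) : Prop :=
  (∀ k, k + 1 < n → T k S = -S) ∧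
  (∃ v : (Fin n → ℕ) → K,
    S = Uminus n tv Tw (xmon n κ) +
      ∑ᶠ μ ∈ {μ : Fin n → ℕ | StrictAnti μ ∧ domLT n μ κ},
        v μ • Uminus n tv Tw (xmon n μ)) ∧
  (∑ i : Fin n, Yop n qv tv T i) S = (∑ i : Fin n, qv ^ κ i * (tv ^ (i : ℕ))⁻¹) • S

/-- d_η(q,t) = ∏_s (1 − q^{a(s)+1} t^{l(s)+1}) -/
noncomputable def dP (n : ℕ) (η : Fin n → ℕ) : K :=
  ∏ i : Fin n, ∏ j ∈ Finset.Icc 1 (η i), (1 - q ^ (η i - j + 1) * t ^ (leg n η i j + 1))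

end Stmt8

open Stmt8


noncomputable def cf {n : ℕ} (f : P n) (ν : Fin n → ℕ) : K :=
  coeff (Finsupp.equivFunOnFinite.symm ν) f

def NN {n : ℕ} (ν : Fin n → ℕ) : ℕ := ∑ i, ν i ^ 2

lemma cf_add {n : ℕ} (f g : P n) (ν : Fin n → ℕ) : cf (f + g) ν = cf f ν + cf g ν := by
  simp [cf]
lemma cf_sub {n : ℕ} (f g : P n) (ν : Fin n → ℕ) : cf (f - g) ν = cf f ν - cf g ν := by
  simp [cf]
lemma cf_neg {n : ℕ} (f : P n) (ν : Fin n → ℕ) : cf (-f) ν = - cf f ν := by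
  simp [cf]
lemma cf_smul {n : ℕ} (c : K) (f : P n) (ν : Fin n → ℕ) : cf (c • f) ν = c * cf f ν := by
  simp [cf]
lemma cf_zero {n : ℕ} (ν : Fin n → ℕ) : cf (0 : P n) ν = 0 := by
  simp [cf]
lemma cf_sum {n : ℕ} {ι : Type*} (s : Finset ι) (f : ι → P n) (ν : Fin n → ℕ) :
    cf (∑ i ∈ s, f i) ν = ∑ i ∈ s, cf (f i) ν := by
  simp [cf, coeff_sum]

noncomputable def cfL {n : ℕ} (ν : Fin n → ℕ) : P n →ₗ[K] K where
  toFun f := cf f ν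
  map_add' f g := cf_add f g ν
  map_smul' c f := cf_smul c f ν

lemma cf_xmon {n : ℕ} (μ ν : Fin n → ℕ) : cf (xmon n μ) ν = if μ = ν then 1 else 0 := by
  simp [cf, xmon, coeff_monomial]

lemma poly_ext {n : ℕ} {f g : P n} (h : ∀ ν, cf f ν = cf g ν) : f = g := by
  ext m
  have := h m
  simpa [cf] using this

lemma exists_cf {n : ℕ} {f : P n} (h : f ≠ 0) : ∃ ν, cf f ν ≠ 0 := by
  by_contra hc
  push Not at hc
  exact h (poly_ext (fun ν => by rw [hc ν, cf_zero]))

lemma lin_ext {n : ℕ} (L1 L2 : P n →ₗ[K] K) (f : P n)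
    (h : ∀ ρ, cf f ρ ≠ 0 → L1 (xmon n ρ) = L2 (xmon n ρ)) : L1 f = L2 f := by
  rw [← support_sum_monomial_coeff f, map_sum, map_sum]
  refine Finset.sum_congr rfl fun m hm => ?_
  have h1 : (monomial m (coeff m f) : P n) = coeff m f • xmon n m := by
    simp [xmon, smul_monomial]
  rw [h1, map_smul, map_smul, h]
  simpa [cf] using hm

lemma xmon_mul {n : ℕ} (μ ν : Fin n → ℕ) : xmon n μ * xmon n ν = xmon n (μ + ν) := by
  simp only [xmon, monomial_mul, one_mul]
  have : Finsupp.equivFunOnFinite.symm μ + Finsupp.equivFunOnFinite.symm ν =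
    Finsupp.equivFunOnFinite.symm (μ + ν) := by ext i; simp
  rw [this]

lemma X_pow_xmon {n : ℕ} (a : Fin n) (d : ℕ) : (X a : P n) ^ d = xmon n (Pi.single a d) := by
  rw [xmon, X_pow_eq_monomial]
  congr 1
  ext i
  simp [Finsupp.single_apply, Pi.single_apply, eq_comm]

lemma xmon_injective {n : ℕ} {μ ν : Fin n → ℕ} (h : xmon n μ = xmon n ν) : μ = ν := by
  have h1 := cf_xmon μ ν
  rw [h, cf_xmon] at h1
  by_contra hc
  simp [hc] at h1

lemma rename_xmon {n : ℕ} (σ : Equiv.Perm (Fin n)) (ν : Fin n → ℕ) :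
    rename σ (xmon n ν) = xmon n (ν ∘ σ.symm) := by
  rw [xmon, rename_monomial, xmon]
  have : Finsupp.mapDomain σ (Finsupp.equivFunOnFinite.symm ν) =
    Finsupp.equivFunOnFinite.symm (ν ∘ σ.symm) := by
    ext i
    simp [Finsupp.mapDomain_equiv_apply]
  rw [this]

/-- the swap of positions k, k+1 -/
def sw {n k : ℕ} (hk : k + 1 < n) : Equiv.Perm (Fin n) :=
  Equiv.swap (⟨k, Nat.lt_of_succ_lt hk⟩ : Fin n) ⟨k + 1, hk⟩

def pa {n k : ℕ} (hk : k + 1 < n) : Fin n := ⟨k, Nat.lt_of_succ_lt hk⟩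
def pb {n k : ℕ} (hk : k + 1 < n) : Fin n := ⟨k + 1, hk⟩

lemma pa_ne_pb {n k : ℕ} (hk : k + 1 < n) : pa hk ≠ pb hk := by
  simp [pa, pb]

lemma sw_a {n k : ℕ} (hk : k + 1 < n) : sw hk (pa hk) = pb hk := Equiv.swap_apply_left _ _
lemma sw_b {n k : ℕ} (hk : k + 1 < n) : sw hk (pb hk) = pa hk := Equiv.swap_apply_right _ _
lemma sw_of_ne {n k : ℕ} (hk : k + 1 < n) {i : Fin n} (h1 : i ≠ pa hk) (h2 : i ≠ pb hk) :
    sw hk i = i := Equiv.swap_apply_of_ne_of_ne h1 h2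
lemma sw_sw {n k : ℕ} (hk : k + 1 < n) (i : Fin n) : sw hk (sw hk i) = i :=
  Equiv.swap_apply_self _ _ _
lemma sw_symm {n k : ℕ} (hk : k + 1 < n) : (sw hk).symm = sw hk := Equiv.symm_swap _ _
lemma comp_sw_sw {n k : ℕ} {α : Type*} (hk : k + 1 < n) (ν : Fin n → α) :
    (ν ∘ sw hk) ∘ sw hk = ν := by
  ext i; simp [sw_sw]
lemma sPerm_eq {n k : ℕ} (hk : k + 1 < n) : sPerm n k = sw hk := by
  simp [sPerm, hk, sw]

/-- s_k as an algebra homomorphism -/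
noncomputable def sA {n k : ℕ} (hk : k + 1 < n) : P n →ₐ[K] P n := rename (sw hk)

lemma sOp_eq {n k : ℕ} (hk : k + 1 < n) (f : P n) : sOp n k f = sA hk f := by
  simp [sOp, hk, sA, sw]

lemma sA_xmon {n k : ℕ} (hk : k + 1 < n) (ν : Fin n → ℕ) :
    sA hk (xmon n ν) = xmon n (ν ∘ sw hk) := by
  rw [sA, rename_xmon, sw_symm]

lemma sA_X {n k : ℕ} (hk : k + 1 < n) (i : Fin n) :
    sA hk (X i) = X (sw hk i) := by
  rw [sA, rename_X]

lemma sA_sA {n k : ℕ} (hk : k + 1 < n) (f : P n) : sA hk (sA hk f) = f := by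
  rw [sA, rename_rename]
  have : (sw hk : Fin n → Fin n) ∘ sw hk = id := by ext i; simp [sw_sw]
  rw [this, rename_id_apply]

lemma DL_eq {n : ℕ} {T : ℕ → P n →ₗ[K] P n} (hT : IsDL n t T) {k : ℕ} (hk : k + 1 < n) (f : P n) :
    (X (pa hk) - X (pb hk)) * T k f = (X (pa hk) - X (pb hk)) * (C t * f) +
      (C t * X (pa hk) - X (pb hk)) * (sA hk f - f) := by
  have := hT k hk f
  rw [sOp_eq hk] at this
  exact this

lemma Xsub_ne {n : ℕ} {a b : Fin n} (h : a ≠ b) : (X a - X b : P n) ≠ 0 := by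
  rw [sub_ne_zero]
  intro hc
  exact h (X_injective hc)

lemma T_unique {n : ℕ} {T : ℕ → P n →ₗ[K] P n} (hT : IsDL n t T) {k : ℕ} (hk : k + 1 < n)
    (f g : P n)
    (h : (X (pa hk) - X (pb hk)) * g = (X (pa hk) - X (pb hk)) * (C t * f) +
      (C t * X (pa hk) - X (pb hk)) * (sA hk f - f)) : T k f = g :=
  mul_left_cancel₀ (Xsub_ne (pa_ne_pb hk)) ((DL_eq hT hk f).trans h.symm)

lemma T_sym_mul {n : ℕ} {T : ℕ → P n →ₗ[K] P n} (hT : IsDL n t T) {k : ℕ} (hk : k + 1 < n)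
    (G f : P n) (hG : sA hk G = G) : T k (G * f) = G * T k f := by
  apply T_unique hT hk
  rw [map_mul, hG]
  linear_combination G * DL_eq hT hk f

/-- middle sum -/
noncomputable def mid {R : Type*} [CommRing R] (x y : R) (d : ℕ) : R :=
  ∑ j ∈ Finset.range (d - 1), x ^ (j + 1) * y ^ (d - 1 - j)

lemma mid_eq {R : Type*} [CommRing R] (x y : R) (d : ℕ) (hd : 1 ≤ d) :
    (x - y) * mid x y d = x ^ d * y - x * y ^ d := by
  obtain ⟨e, rfl⟩ : ∃ e, d = e + 1 := ⟨d - 1, by omega⟩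
  simp only [mid, Nat.add_sub_cancel]
  have h1 := Commute.geom_sum₂_mul (Commute.all x y) e
  have h2 : ∑ j ∈ Finset.range e, x ^ (j + 1) * y ^ (e - j) =
      (∑ i ∈ Finset.range e, x ^ i * y ^ (e - 1 - i)) * (x * y) := by
    rw [Finset.sum_mul]
    refine Finset.sum_congr rfl fun j hj => ?_
    have : e - j = (e - 1 - j) + 1 := by have := Finset.mem_range.mp hj; omega
    rw [this]; ring
  rw [h2]
  linear_combination (x * y) * h1

lemma T_Xa_pow {n : ℕ} {T : ℕ → P n →ₗ[K] P n} (hT : IsDL n t T) {k : ℕ} (hk : k + 1 < n)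
    (d : ℕ) (hd : 1 ≤ d) :
    T k (X (pa hk) ^ d) = X (pb hk) ^ d + (1 - C t) * mid (X (pa hk)) (X (pb hk)) d := by
  apply T_unique hT hk
  rw [map_pow, sA_X, sw_a]
  linear_combination (1 - C t) * mid_eq (X (pa hk) : P n) (X (pb hk)) d hd

lemma T_Xb_pow {n : ℕ} {T : ℕ → P n →ₗ[K] P n} (hT : IsDL n t T) {k : ℕ} (hk : k + 1 < n)
    (d : ℕ) (hd : 1 ≤ d) :
    T k (X (pb hk) ^ d) = C t * X (pa hk) ^ d + (C t - 1) * X (pb hk) ^ d +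
      (C t - 1) * mid (X (pa hk)) (X (pb hk)) d := by
  apply T_unique hT hk
  rw [map_pow, sA_X, sw_b]
  linear_combination (C t - 1) * mid_eq (X (pa hk) : P n) (X (pb hk)) d hd

lemma T_one {n : ℕ} {T : ℕ → P n →ₗ[K] P n} (hT : IsDL n t T) {k : ℕ} (hk : k + 1 < n)
    (f : P n) (hf : sA hk f = f) : T k f = C t * f := by
  apply T_unique hT hk
  rw [hf]; ring

lemma NN_perm {n : ℕ} (ν : Fin n → ℕ) (σ : Equiv.Perm (Fin n)) : NN (ν ∘ σ) = NN ν := by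
  simp only [NN, Function.comp]
  exact Equiv.sum_comp σ (fun i => ν i ^ 2)

lemma sum_two {n : ℕ} {M : Type*} [AddCommMonoid M] (g : Fin n → M) {a b : Fin n} (h : a ≠ b) :
    ∑ i, g i = g a + g b + ∑ i ∈ univ.filter (fun i => i ≠ a ∧ i ≠ b), g i := by
  rw [← Finset.sum_filter_add_sum_filter_not univ (fun i => i ≠ a ∧ i ≠ b), add_comm]
  congr 1
  have : univ.filter (fun i => ¬ (i ≠ a ∧ i ≠ b)) = {a, b} := by
    ext i; simp; tauto
  rw [this, Finset.sum_pair h]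

lemma NN_lt {n : ℕ} (μ ν : Fin n → ℕ) {a b : Fin n} (hab : a ≠ b)
    (h : ∀ i, i ≠ a → i ≠ b → μ i = ν i) (h2 : μ a ^ 2 + μ b ^ 2 < ν a ^ 2 + ν b ^ 2) :
    NN μ < NN ν := by
  simp only [NN]
  rw [sum_two _ hab, sum_two (fun i => ν i ^ 2) hab]
  have : ∑ i ∈ univ.filter (fun i => i ≠ a ∧ i ≠ b), μ i ^ 2 =
      ∑ i ∈ univ.filter (fun i => i ≠ a ∧ i ≠ b), ν i ^ 2 := by
    refine Finset.sum_congr rfl fun i hi => ?_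
    simp at hi
    rw [h i hi.1 hi.2]
  omega

/-- coefficients of G * mid at monomials of large norm vanish -/
lemma cf_mid {n : ℕ} (μ ν ρ : Fin n → ℕ) {a b : Fin n} (hab : a ≠ b) (d : ℕ)
    (hμ : μ a = μ b) (h : ∀ i, i ≠ a → i ≠ b → μ i = ρ i)
    (hρ : (μ a + d) ^ 2 + μ a ^ 2 = ρ a ^ 2 + ρ b ^ 2) (hN : NN ρ ≤ NN ν) :
    cf (xmon n μ * mid (X a) (X b) d) ν = 0 := by
  simp only [mid, Finset.mul_sum, cf_sum]
  refine Finset.sum_eq_zero fun j hj => ?_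
  have hj := Finset.mem_range.mp hj
  rw [X_pow_xmon, X_pow_xmon, xmon_mul, xmon_mul, cf_xmon, if_neg]
  rintro rfl
  refine absurd (NN_lt _ ρ hab ?_ ?_) (not_lt.mpr hN)
  · intro i h1 h2
    simp [h1, h2, h i h1 h2]
  · simp [hab, hab.symm]
    rw [← hρ, ← hμ]
    obtain ⟨e, he⟩ : ∃ e, d = j + 1 + (e + 1) := ⟨d - j - 2, by omega⟩
    have : d - 1 - j = e + 1 := by omega
    rw [this, he]
    nlinarith

lemma T_xmon {n : ℕ} {T : ℕ → P n →ₗ[K] P n} (hT : IsDL n t T) {k : ℕ} (hk : k + 1 < n)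
    (ρ ν : Fin n → ℕ) (hN : NN ρ ≤ NN ν) :
    cf (T k (xmon n ρ)) ν = if ν (pa hk) < ν (pb hk) then
      cf (xmon n ρ) (ν ∘ sw hk) + (t - 1) * cf (xmon n ρ) ν
      else t * cf (xmon n ρ) (ν ∘ sw hk) := by
  have hab := pa_ne_pb hk
  have hba := hab.symm
  have key : (ρ = ν ∘ sw hk) ↔ (ρ ∘ sw hk = ν) := by
    constructor
    · rintro rfl; exact comp_sw_sw hk ν
    · rintro rfl; exact (comp_sw_sw hk ρ).symm
  have hcC : ∀ (c : K) (f : P n), cf (C c * f) ν = c * cf f ν := by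
    intro c f; rw [← smul_eq_C_mul, cf_smul]
  have hfix : ∀ μ : Fin n → ℕ, μ (pa hk) = μ (pb hk) → μ ∘ sw hk = μ := by
    intro μ hμ
    ext i
    by_cases h1 : i = pa hk
    · subst h1; simp [sw_a, hμ]
    by_cases h2 : i = pb hk
    · subst h2; simp [sw_b, hμ]
    simp [sw_of_ne hk h1 h2]
  have hval : ∀ μ : Fin n → ℕ, ρ ∘ sw hk = μ → μ (pa hk) = ρ (pb hk) ∧ μ (pb hk) = ρ (pa hk) := by
    rintro μ rfl; simp [sw_a, sw_b]
  simp only [cf_xmon, key]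
  rcases lt_trichotomy (ρ (pa hk)) (ρ (pb hk)) with h | h | h
  · -- ρ a < ρ b
    obtain ⟨d, hd⟩ : ∃ d, ρ (pb hk) = ρ (pa hk) + d := ⟨_, (Nat.add_sub_of_le h.le).symm⟩
    set μ := Function.update ρ (pb hk) (ρ (pa hk)) with hμ
    have e1 : xmon n ρ = xmon n μ * X (pb hk) ^ d := by
      rw [X_pow_xmon, xmon_mul]; congr 1; ext i
      by_cases h2 : i = pb hk
      · subst h2; simp [hμ, hd]
      · simp [hμ, h2]
    have hμs : sA hk (xmon n μ) = xmon n μ := by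
      rw [sA_xmon, hfix]; simp [hμ, hab]
    have e2 : xmon n (ρ ∘ sw hk) = xmon n μ * X (pa hk) ^ d := by
      rw [← sA_xmon, e1, map_mul, hμs, map_pow, sA_X, sw_b]
    have e3 : T k (xmon n ρ) = C t * xmon n (ρ ∘ sw hk) + C (t - 1) * xmon n ρ +
        C (t - 1) * (xmon n μ * mid (X (pa hk)) (X (pb hk)) d) := by
      rw [e1, T_sym_mul hT hk _ _ hμs, T_Xb_pow hT hk d (by omega), e2]
      simp only [C_sub, C_1]
      ring
    rw [e3, cf_add, cf_add, hcC, hcC, hcC, cf_mid μ ν ρ hab d _ _ _ hN, cf_xmon, cf_xmon]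
    · by_cases h1 : ρ ∘ sw hk = ν
      · have h3 := hval ν h1
        have h2 : ρ ≠ ν := by rintro rfl; omega
        rw [if_neg (show ¬ ν (pa hk) < ν (pb hk) by omega)]
        simp [h1, h2]
      · by_cases h2 : ρ = ν
        · subst h2; simp [h1, h]
        · simp [h1, h2]
    · simp [hμ, hab]
    · intro i h1 h2; simp [hμ, h2]
    · simp [hμ, hab, hd]; ring
  · have hs := hfix ρ h
    rw [T_one hT hk, hcC, cf_xmon, hs]
    · by_cases h2 : ρ = ν
      · subst h2; simp [h]
      · simp [h2]
    · rw [sA_xmon, hs]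
  · obtain ⟨d, hd⟩ : ∃ d, ρ (pa hk) = ρ (pb hk) + d := ⟨_, (Nat.add_sub_of_le h.le).symm⟩
    set μ := Function.update ρ (pa hk) (ρ (pb hk)) with hμ
    have e1 : xmon n ρ = xmon n μ * X (pa hk) ^ d := by
      rw [X_pow_xmon, xmon_mul]; congr 1; ext i
      by_cases h2 : i = pa hk
      · subst h2; simp [hμ, hd]
      · simp [hμ, h2]
    have hμs : sA hk (xmon n μ) = xmon n μ := by
      rw [sA_xmon, hfix]; simp [hμ, hba]
    have e2 : xmon n (ρ ∘ sw hk) = xmon n μ * X (pb hk) ^ d := by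
      rw [← sA_xmon, e1, map_mul, hμs, map_pow, sA_X, sw_a]
    have e3 : T k (xmon n ρ) = xmon n (ρ ∘ sw hk) +
        C (1 - t) * (xmon n μ * mid (X (pa hk)) (X (pb hk)) d) := by
      rw [e1, T_sym_mul hT hk _ _ hμs, T_Xa_pow hT hk d (by omega), e2]
      simp only [C_sub, C_1]
      ring
    rw [e3, cf_add, hcC, cf_mid μ ν ρ hab d _ _ _ hN, cf_xmon]
    · by_cases h1 : ρ ∘ sw hk = ν
      · have h3 := hval ν h1
        have h2 : ρ ≠ ν := by rintro rfl; omega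
        rw [if_pos (show ν (pa hk) < ν (pb hk) by omega)]
        simp [h1, h2]
      · by_cases h2 : ρ = ν
        · subst h2; simp [h1, h.le]
        · simp [h1, h2]
    · simp [hμ, hba]
    · intro i h1 h2; simp [hμ, h1]
    · simp [hμ, hba, hd]

lemma cf_T {n : ℕ} {T : ℕ → P n →ₗ[K] P n} (hT : IsDL n t T) {k : ℕ} (hk : k + 1 < n)
    (f : P n) (ν : Fin n → ℕ) (hN : ∀ ρ, cf f ρ ≠ 0 → NN ρ ≤ NN ν) :
    cf (T k f) ν = if ν (pa hk) < ν (pb hk) then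
      cf f (ν ∘ sw hk) + (t - 1) * cf f ν else t * cf f (ν ∘ sw hk) := by
  split_ifs with h
  · refine lin_ext (cfL ν ∘ₗ T k) (cfL (ν ∘ sw hk) + (t - 1) • cfL ν) f fun ρ hρ => ?_
    have := T_xmon hT hk ρ ν (hN ρ hρ)
    rw [if_pos h] at this
    exact this
  · refine lin_ext (cfL ν ∘ₗ T k) (t • cfL (ν ∘ sw hk)) f fun ρ hρ => ?_
    have := T_xmon hT hk ρ ν (hN ρ hρ)
    rw [if_neg h] at this
    exact this

lemma t_ne : t ≠ 0 := by
  simp [t]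

lemma cf_Tinv {n : ℕ} {T : ℕ → P n →ₗ[K] P n} (hT : IsDL n t T) {k : ℕ} (hk : k + 1 < n)
    (f : P n) (ν : Fin n → ℕ) (hN : ∀ ρ, cf f ρ ≠ 0 → NN ρ ≤ NN ν) :
    cf (Tinv n t T k f) ν = if ν (pa hk) ≤ ν (pb hk) then
      t⁻¹ * cf f (ν ∘ sw hk) else cf f (ν ∘ sw hk) + (t⁻¹ - 1) * cf f ν := by
  have ht := t_ne
  simp only [Tinv, LinearMap.add_apply, LinearMap.sub_apply, LinearMap.smul_apply,
    LinearMap.id_apply, cf_add, cf_sub, cf_smul, cf_T hT hk f ν hN]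
  rcases lt_trichotomy (ν (pa hk)) (ν (pb hk)) with h | h | h
  · rw [if_pos h, if_pos h.le]; field_simp; ring
  · have hs : ν ∘ sw hk = ν := by
      ext i
      by_cases h1 : i = pa hk
      · subst h1; simp [sw_a, h]
      by_cases h2 : i = pb hk
      · subst h2; simp [sw_b, h]
      simp [sw_of_ne hk h1 h2]
    rw [if_neg h.not_lt, if_pos h.le, hs]; field_simp; ring
  · rw [if_neg h.not_gt, if_neg h.not_ge]; field_simp; ring


/-- where the variable x_j goes under s_{m-1} ⋯ s_0 (j = 0 goes to m) -/
def rotF {n : ℕ} (m : ℕ) (hm : m < n) (j : Fin n) : Fin n :=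
  if (j : ℕ) = 0 then ⟨m, hm⟩ else if (j : ℕ) ≤ m then ⟨j - 1, by omega⟩ else j

lemma omega_partial {n : ℕ} (m : ℕ) (hm : m < n) :
    (List.range m).foldl (fun acc k => sOp n k ∘ₗ acc) (tauOp n q) =
    (aeval (fun j : Fin n => if (j : ℕ) = 0 then C q * X (rotF m hm j) else
      (X (rotF m hm j) : P n))).toLinearMap := by
  induction m with
  | zero =>
    simp only [List.range_zero, List.foldl_nil, tauOp]
    congr 3
    ext1 j
    by_cases hj : (j : ℕ) = 0
    · have : rotF 0 hm j = j := by
        ext; simp [rotF, hj]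
      simp [hj, this]
    · have : rotF 0 hm j = j := by
        simp [rotF, hj]
      simp [hj, this]
  | succ m ih =>
    rw [List.range_succ, List.foldl_append, ih (by omega)]
    simp only [List.foldl_cons, List.foldl_nil]
    have h1 : sOp n m = (sA hm).toLinearMap := by
      apply LinearMap.ext; intro f; exact sOp_eq hm f
    rw [h1, ← AlgHom.comp_toLinearMap]
    congr 1
    apply MvPolynomial.algHom_ext
    intro j
    have hr : sw hm (rotF m (by omega) j) = rotF (m + 1) hm j := by
      by_cases hj : (j : ℕ) = 0
      · have e1 : rotF m (by omega) j = pa hm := by ext; simp [rotF, hj, pa]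
        rw [e1, sw_a]; ext; simp [rotF, hj, pb]
      · by_cases hj2 : (j : ℕ) = m + 1
        · have e1 : rotF m (by omega) j = pb hm := by ext; simp [rotF, hj2, pb]
          rw [e1, sw_b]; ext; simp [rotF, hj2, pa]
        · have e1 : rotF (m + 1) hm j = rotF m (by omega) j := by
            ext; simp only [rotF]; split_ifs <;> omega
          rw [e1]
          apply sw_of_ne
          · intro h; have := congrArg Fin.val h; simp only [rotF, pa] at this
            split_ifs at this <;> (try simp only at this) <;> omega
          · intro h; have := congrArg Fin.val h; simp only [rotF, pb] at this
            split_ifs at this <;> (try simp only at this) <;> omega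
    simp only [AlgHom.comp_apply, aeval_X]
    split_ifs with hj
    · rw [map_mul, sA_X, hr]
      congr 1
      simp [sA]
    · rw [sA_X, hr]

/-- ω as an algebra homomorphism -/
noncomputable def om {n : ℕ} (hn : 0 < n) : P n →ₐ[K] P n :=
  aeval (fun j : Fin n => if (j : ℕ) = 0 then C q * X (rotF (n - 1) (by omega) j) else
      (X (rotF (n - 1) (by omega) j) : P n))

lemma omegaOp_eq {n : ℕ} (hn : 0 < n) (f : P n) : omegaOp n q f = om hn f := by
  rw [omegaOp, omega_partial (n - 1) (by omega)]
  rfl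

/-- cyclic permutation j ↦ j+1 -/
def cyc {n : ℕ} (hn : 0 < n) (j : Fin n) : Fin n :=
  if h : (j : ℕ) + 1 < n then ⟨j + 1, h⟩ else ⟨0, hn⟩

lemma rotF_cyc {n : ℕ} (hn : 0 < n) (j : Fin n) : rotF (n - 1) (by omega) (cyc hn j) = j := by
  ext; simp only [rotF, cyc]; split_ifs <;> simp_all <;> omega

lemma cyc_rotF {n : ℕ} (hn : 0 < n) (j : Fin n) : cyc hn (rotF (n - 1) (by omega) j) = j := by
  have hl : Function.LeftInverse (rotF (n - 1) (by omega)) (cyc hn) := rotF_cyc hn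
  obtain ⟨i, rfl⟩ := (Finite.injective_iff_surjective.mp hl.injective) j
  rw [rotF_cyc]

def cycE {n : ℕ} (hn : 0 < n) : Equiv.Perm (Fin n) where
  toFun := cyc hn
  invFun := rotF (n - 1) (by omega)
  left_inv := rotF_cyc hn
  right_inv := cyc_rotF hn

lemma xmon_prod {n : ℕ} (ν : Fin n → ℕ) : xmon n ν = ∏ i, X i ^ ν i := by
  rw [xmon, monomial_eq]
  simp [Finsupp.prod_fintype]

lemma om_xmon {n : ℕ} (hn : 0 < n) (ν : Fin n → ℕ) :
    om hn (xmon n ν) = C (q ^ ν ⟨0, hn⟩) * xmon n (ν ∘ cyc hn) := by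
  rw [xmon_prod, xmon_prod, map_prod]
  have h1 : ∀ i : Fin n, om hn (X i ^ ν i) =
      (if i = ⟨0, hn⟩ then C (q ^ ν ⟨0, hn⟩) else 1) * X ((cycE hn).symm i) ^ ν i := by
    intro i
    have : (cycE hn).symm i = rotF (n - 1) (by omega) i := rfl
    rw [map_pow, om, aeval_X, this]
    by_cases hi : i = ⟨0, hn⟩
    · subst hi; simp [mul_pow]
    · have : (i : ℕ) ≠ 0 := fun h => hi (Fin.ext h)
      simp [hi, this]
  simp only [h1]
  rw [Finset.prod_mul_distrib, Finset.prod_ite_eq' univ, if_pos (mem_univ _)]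
  congr 1
  rw [← Equiv.prod_comp (cycE hn)]
  refine Finset.prod_congr rfl fun i _ => ?_
  rw [Equiv.symm_apply_apply]; rfl

lemma q_ne : q ≠ 0 := by simp [q]

lemma cf_om {n : ℕ} (hn : 0 < n) (f : P n) (ν : Fin n → ℕ) :
    cf (om hn f) (ν ∘ cyc hn) = q ^ ν ⟨0, hn⟩ * cf f ν := by
  refine lin_ext (cfL (ν ∘ cyc hn) ∘ₗ (om hn).toLinearMap) (q ^ ν ⟨0, hn⟩ • cfL ν) f
    fun ρ _ => ?_
  change cf (om hn (xmon n ρ)) (ν ∘ cyc hn) = q ^ ν ⟨0, hn⟩ * cf (xmon n ρ) ν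
  rw [om_xmon, ← smul_eq_C_mul, cf_smul, cf_xmon, cf_xmon]
  have : (ρ ∘ cyc hn = ν ∘ cyc hn) ↔ ρ = ν := by
    constructor
    · intro h
      ext i
      have := congrFun h ((cycE hn).symm i)
      have e : cyc hn ((cycE hn).symm i) = i := (cycE hn).apply_symm_apply i
      simpa [e] using this
    · rintro rfl; rfl
  by_cases h : ρ = ν
  · subst h; simp
  · simp [this, h]

/-- support condition -/
def Sup {n : ℕ} (M c : ℕ) (w : Fin n → ℕ) (f : P n) : Prop :=
  ∀ ρ, cf f ρ ≠ 0 → NN ρ < M ∨ (NN ρ = M ∧ c ≤ ∑ i, w i * ρ i)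

lemma Sup.le {n : ℕ} {M c : ℕ} {w : Fin n → ℕ} {f : P n} (h : Sup M c w f) :
    ∀ ρ, cf f ρ ≠ 0 → NN ρ ≤ M := by
  intro ρ hρ
  rcases h ρ hρ with h | h <;> omega

lemma dot_perm {n : ℕ} (w ν : Fin n → ℕ) (σ : Equiv.Perm (Fin n)) :
    ∑ i, (w ∘ σ) i * (ν ∘ σ) i = ∑ i, w i * ν i :=
  Equiv.sum_comp σ (fun i => w i * ν i)

lemma dot_sw {n k : ℕ} (hk : k + 1 < n) (w ν : Fin n → ℕ) :
    ∑ i, (w ∘ sw hk) i * ν i = w (pb hk) * ν (pa hk) + w (pa hk) * ν (pb hk) +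
      ∑ i ∈ univ.filter (fun i => i ≠ pa hk ∧ i ≠ pb hk), w i * ν i := by
  rw [sum_two _ (pa_ne_pb hk)]
  simp only [Function.comp, sw_a, sw_b]
  congr 1
  refine Finset.sum_congr rfl fun i hi => ?_
  simp at hi
  rw [sw_of_ne hk hi.1 hi.2]

lemma dot_sw_lt {n k : ℕ} (hk : k + 1 < n) (w ν : Fin n → ℕ)
    (h : (w (pb hk) < w (pa hk) ∧ ν (pa hk) < ν (pb hk)) ∨
      (w (pa hk) < w (pb hk) ∧ ν (pb hk) < ν (pa hk))) :
    ∑ i, w i * ν i < ∑ i, (w ∘ sw hk) i * ν i := by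
  rw [dot_sw, sum_two _ (pa_ne_pb hk)]
  rcases h with ⟨h1, h2⟩ | ⟨h1, h2⟩ <;> nlinarith

lemma dot_sw' {n k : ℕ} (hk : k + 1 < n) (w ν : Fin n → ℕ) :
    ∑ i, (w ∘ sw hk) i * ν i = ∑ i, w i * (ν ∘ sw hk) i := by
  rw [← dot_perm w (ν ∘ sw hk) (sw hk), comp_sw_sw]

lemma NN_T {n : ℕ} {T : ℕ → P n →ₗ[K] P n} (hT : IsDL n t T) {k : ℕ} (hk : k + 1 < n)
    (f : P n) (M : ℕ) (h : ∀ ρ, cf f ρ ≠ 0 → NN ρ ≤ M) :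
    ∀ ρ, cf (T k f) ρ ≠ 0 → NN ρ ≤ M := by
  intro ρ hρ
  by_contra hc
  push Not at hc
  have h0 : ∀ μ, NN μ = NN ρ → cf f μ = 0 := by
    intro μ hμ
    by_contra h1
    have := h μ h1
    omega
  apply hρ
  rw [cf_T hT hk f ρ (fun μ hμ => by have := h μ hμ; omega), h0 ρ rfl, h0 _ (NN_perm _ _)]
  simp

lemma NN_Tinv {n : ℕ} {T : ℕ → P n →ₗ[K] P n} (hT : IsDL n t T) {k : ℕ} (hk : k + 1 < n)
    (f : P n) (M : ℕ) (h : ∀ ρ, cf f ρ ≠ 0 → NN ρ ≤ M) :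
    ∀ ρ, cf (Tinv n t T k f) ρ ≠ 0 → NN ρ ≤ M := by
  intro ρ hρ
  by_contra hc
  push Not at hc
  have h0 : ∀ μ, NN μ = NN ρ → cf f μ = 0 := by
    intro μ hμ
    by_contra h1
    have := h μ h1
    omega
  apply hρ
  rw [cf_Tinv hT hk f ρ (fun μ hμ => by have := h μ hμ; omega), h0 ρ rfl, h0 _ (NN_perm _ _)]
  simp

lemma Sup_T {n : ℕ} {T : ℕ → P n →ₗ[K] P n} (hT : IsDL n t T) {k : ℕ} (hk : k + 1 < n)
    {f : P n} {M c : ℕ} {w : Fin n → ℕ} (hw : w (pb hk) < w (pa hk)) (h : Sup M c w f) :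
    Sup M c (w ∘ sw hk) (T k f) := by
  intro ρ hρ
  have h1 := NN_T hT hk f M h.le ρ hρ
  rcases h1.lt_or_eq with h1 | h1
  · exact Or.inl h1
  refine Or.inr ⟨h1, ?_⟩
  rw [cf_T hT hk f ρ (by rw [h1]; exact h.le)] at hρ
  by_cases h2 : cf f (ρ ∘ sw hk) = 0
  · rw [h2] at hρ
    split_ifs at hρ with h3
    · have h4 : cf f ρ ≠ 0 := by intro h4; simp [h4] at hρ
      have := dot_sw_lt hk w ρ (Or.inl ⟨hw, h3⟩)
      have := h ρ h4
      omega
    · simp at hρ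
  · have := h _ h2
    rw [NN_perm] at this
    rw [dot_sw']
    omega

lemma cf_T_sw {n : ℕ} {T : ℕ → P n →ₗ[K] P n} (hT : IsDL n t T) {k : ℕ} (hk : k + 1 < n)
    {f : P n} {M c : ℕ} {w : Fin n → ℕ} (hw : w (pb hk) < w (pa hk)) (h : Sup M c w f)
    (ν : Fin n → ℕ) (hM : NN ν = M) (hc : ∑ i, w i * ν i = c) :
    cf (T k f) (ν ∘ sw hk) = (if ν (pa hk) ≤ ν (pb hk) then t else 1) * cf f ν := by
  rw [cf_T hT hk f _ (by rw [NN_perm, hM]; exact h.le), comp_sw_sw]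
  simp only [Function.comp, sw_a, sw_b]
  by_cases h1 : ν (pa hk) ≤ ν (pb hk)
  · simp [h1, not_lt.mpr h1]
  · push Not at h1
    have h0 : cf f (ν ∘ sw hk) = 0 := by
      by_contra h2
      have h3 := h _ h2
      rw [NN_perm, ← dot_sw'] at h3
      have h4 := dot_sw_lt hk w (ν ∘ sw hk) (Or.inl ⟨hw, by simpa [sw_a, sw_b] using h1⟩)
      rw [dot_sw', comp_sw_sw, ← dot_sw'] at h4
      omega
    simp [h1, not_le.mpr h1, h0]

lemma Sup_Tinv {n : ℕ} {T : ℕ → P n →ₗ[K] P n} (hT : IsDL n t T) {k : ℕ} (hk : k + 1 < n)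
    {f : P n} {M c : ℕ} {w : Fin n → ℕ} (hw : w (pa hk) < w (pb hk)) (h : Sup M c w f) :
    Sup M c (w ∘ sw hk) (Tinv n t T k f) := by
  intro ρ hρ
  have h1 := NN_Tinv hT hk f M h.le ρ hρ
  rcases h1.lt_or_eq with h1 | h1
  · exact Or.inl h1
  refine Or.inr ⟨h1, ?_⟩
  rw [cf_Tinv hT hk f ρ (by rw [h1]; exact h.le)] at hρ
  by_cases h2 : cf f (ρ ∘ sw hk) = 0
  · rw [h2] at hρ
    split_ifs at hρ with h3
    · simp at hρ
    · have h4 : cf f ρ ≠ 0 := by intro h4; simp [h4] at hρ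
      have := dot_sw_lt hk w ρ (Or.inr ⟨hw, by omega⟩)
      have := h ρ h4
      omega
  · have := h _ h2
    rw [NN_perm] at this
    rw [dot_sw']
    omega

lemma cf_Tinv_sw {n : ℕ} {T : ℕ → P n →ₗ[K] P n} (hT : IsDL n t T) {k : ℕ} (hk : k + 1 < n)
    {f : P n} {M c : ℕ} {w : Fin n → ℕ} (hw : w (pa hk) < w (pb hk)) (h : Sup M c w f)
    (ν : Fin n → ℕ) (hM : NN ν = M) (hc : ∑ i, w i * ν i = c) :
    cf (Tinv n t T k f) (ν ∘ sw hk) = (if ν (pb hk) ≤ ν (pa hk) then t⁻¹ else 1) * cf f ν := by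
  rw [cf_Tinv hT hk f _ (by rw [NN_perm, hM]; exact h.le), comp_sw_sw]
  simp only [Function.comp, sw_a, sw_b]
  by_cases h1 : ν (pb hk) ≤ ν (pa hk)
  · simp [h1]
  · push Not at h1
    have h0 : cf f (ν ∘ sw hk) = 0 := by
      by_contra h2
      have h3 := h _ h2
      rw [NN_perm, ← dot_sw'] at h3
      have h4 := dot_sw_lt hk w (ν ∘ sw hk) (Or.inr ⟨hw, by simpa [sw_a, sw_b] using h1⟩)
      rw [dot_sw', comp_sw_sw, ← dot_sw'] at h4
      omega
    simp [not_le.mpr h1, h0]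

lemma Sup_om {n : ℕ} (hn : 0 < n) {f : P n} {M c : ℕ} {w : Fin n → ℕ} (h : Sup M c w f) :
    Sup M c (w ∘ cyc hn) (om hn f) := by
  intro ρ hρ
  have e : ρ = (ρ ∘ (cycE hn).symm) ∘ cyc hn := by
    ext i
    have : (cycE hn).symm (cyc hn i) = i := (cycE hn).symm_apply_apply i
    simp [this]
  rw [e, cf_om] at hρ
  have h1 := h _ (right_ne_zero_of_mul hρ)
  rw [NN_perm] at h1
  have h2 := dot_perm w (ρ ∘ (cycE hn).symm) (cycE hn)
  have e2 : (ρ ∘ (cycE hn).symm) ∘ cycE hn = ρ := by ext i; simp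
  rw [e2] at h2
  have h3 : ∑ i, (w ∘ cyc hn) i * ρ i = ∑ i, (w ∘ cycE hn) i * ρ i := rfl
  omega


/-- bookkeeping for triangularity of the Cherednik operators -/
def Good {n : ℕ} (M c : ℕ) (ν : Fin n → ℕ) (π : Fin n → Fin n) (g : P n) (v : K) : Prop :=
  Sup M c (fun i => (π i : ℕ)) g ∧ NN (ν ∘ π) = M ∧ ∑ i, (π i : ℕ) * (ν ∘ π) i = c ∧
    cf g (ν ∘ π) = v

lemma Good_T {n : ℕ} {T : ℕ → P n →ₗ[K] P n} (hT : IsDL n t T) {k : ℕ} (hk : k + 1 < n)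
    {M c : ℕ} {ν : Fin n → ℕ} {π : Fin n → Fin n} {g : P n} {v : K} (h : Good M c ν π g v)
    (hw : π (pb hk) < π (pa hk)) :
    Good M c ν (π ∘ sw hk) (T k g) ((if ν (π (pa hk)) ≤ ν (π (pb hk)) then t else 1) * v) := by
  obtain ⟨h1, h2, h3, h4⟩ := h
  refine ⟨Sup_T hT hk (w := fun i => (π i : ℕ)) hw h1, ?_, ?_, ?_⟩
  · rw [← Function.comp_assoc, NN_perm, h2]
  · rw [← h3]
    exact dot_perm (fun i => (π i : ℕ)) (ν ∘ π) (sw hk)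
  · rw [← h4]
    exact cf_T_sw hT hk (w := fun i => (π i : ℕ)) hw h1 (ν ∘ π) h2 h3

lemma Good_Tinv {n : ℕ} {T : ℕ → P n →ₗ[K] P n} (hT : IsDL n t T) {k : ℕ} (hk : k + 1 < n)
    {M c : ℕ} {ν : Fin n → ℕ} {π : Fin n → Fin n} {g : P n} {v : K} (h : Good M c ν π g v)
    (hw : π (pa hk) < π (pb hk)) :
    Good M c ν (π ∘ sw hk) (Tinv n t T k g)
      ((if ν (π (pb hk)) ≤ ν (π (pa hk)) then t⁻¹ else 1) * v) := by
  obtain ⟨h1, h2, h3, h4⟩ := h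
  refine ⟨Sup_Tinv hT hk (w := fun i => (π i : ℕ)) hw h1, ?_, ?_, ?_⟩
  · rw [← Function.comp_assoc, NN_perm, h2]
  · rw [← h3]
    exact dot_perm (fun i => (π i : ℕ)) (ν ∘ π) (sw hk)
  · rw [← h4]
    exact cf_Tinv_sw hT hk (w := fun i => (π i : ℕ)) hw h1 (ν ∘ π) h2 h3

lemma Good_om {n : ℕ} (hn : 0 < n)
    {M c : ℕ} {ν : Fin n → ℕ} {π : Fin n → Fin n} {g : P n} {v : K} (h : Good M c ν π g v) :
    Good M c ν (π ∘ cyc hn) (om hn g) (q ^ ν (π ⟨0, hn⟩) * v) := by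
  obtain ⟨h1, h2, h3, h4⟩ := h
  refine ⟨Sup_om hn (w := fun i => (π i : ℕ)) h1, ?_, ?_, ?_⟩
  · rw [← h2]; exact NN_perm (ν ∘ π) (cycE hn)
  · rw [← h3]
    exact dot_perm (fun i => (π i : ℕ)) (ν ∘ π) (cycE hn)
  · rw [← h4]
    exact cf_om hn g (ν ∘ π)

def pi1 {n : ℕ} (i : Fin n) (p : ℕ) (j : Fin n) : Fin n :=
  if (j : ℕ) < p then j else if (j : ℕ) = p then i else
    if j ≤ i then ⟨j - 1, by omega⟩ else j

def pi2 {n : ℕ} (i : Fin n) (p : ℕ) (j : Fin n) : Fin n :=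
  if j < i then j else if h : (j : ℕ) < p ∧ (j : ℕ) + 1 < n then ⟨j + 1, h.2⟩ else
    if (j : ℕ) = p then i else j

lemma sw_val {n k : ℕ} (hk : k + 1 < n) (j : Fin n) :
    ((sw hk j : Fin n) : ℕ) = if (j : ℕ) = k then k + 1 else if (j : ℕ) = k + 1 then k else j := by
  by_cases h1 : j = pa hk
  · subst h1; rw [sw_a]; simp [pa, pb]
  by_cases h2 : j = pb hk
  · subst h2; rw [sw_b]; simp [pa, pb]
  rw [sw_of_ne hk h1 h2]
  have h1' : (j : ℕ) ≠ k := fun h => h1 (Fin.ext h)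
  have h2' : (j : ℕ) ≠ k + 1 := fun h => h2 (Fin.ext h)
  simp [h1', h2']

lemma pi1_val {n : ℕ} (i : Fin n) (p : ℕ) (j : Fin n) : ((pi1 i p j : Fin n) : ℕ) =
    if (j : ℕ) < p then (j : ℕ) else if (j : ℕ) = p then (i : ℕ) else
    if (j : ℕ) ≤ i then (j : ℕ) - 1 else j := by
  rw [pi1]; simp only [Fin.le_def]; split_ifs <;> rfl

lemma pi2_val {n : ℕ} (i : Fin n) (p : ℕ) (j : Fin n) : ((pi2 i p j : Fin n) : ℕ) =
    if (j : ℕ) < i then (j : ℕ) else if (j : ℕ) < p ∧ (j : ℕ) + 1 < n then (j : ℕ) + 1 else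
    if (j : ℕ) = p then (i : ℕ) else j := by
  rw [pi2]; simp only [Fin.lt_def]; split_ifs <;> rfl

lemma cyc_val {n : ℕ} (hn : 0 < n) (j : Fin n) : ((cyc hn j : Fin n) : ℕ) =
    if (j : ℕ) + 1 < n then (j : ℕ) + 1 else 0 := by
  rw [cyc]; split_ifs <;> rfl

lemma pi1_step {n : ℕ} (i : Fin n) (p : ℕ) (hp : p < i) (hk : p + 1 < n) :
    pi1 i p = pi1 i (p + 1) ∘ sw hk := by
  ext j
  simp only [Function.comp, pi1_val, sw_val]
  split_ifs <;> omega

lemma pi2_step {n : ℕ} (i : Fin n) (p : ℕ) (hp : i ≤ p) (hk : p + 1 < n) :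
    pi2 i p = pi2 i (p + 1) ∘ sw hk := by
  ext j
  simp only [Function.comp, pi2_val, sw_val]
  split_ifs <;> omega

lemma pi12 {n : ℕ} (hn : 0 < n) (i : Fin n) : pi1 i 0 ∘ cyc hn = pi2 i (n - 1) := by
  ext j
  have hj := j.isLt
  have hi := i.isLt
  rw [Function.comp]
  rw [pi1_val, pi2_val]
  have hc := cyc_val hn j
  generalize ((cyc hn j : Fin n) : ℕ) = x at *
  generalize (j : ℕ) = y at *
  generalize (i : ℕ) = z at *
  clear j i
  split_ifs at * <;> omega

lemma pi2_id {n : ℕ} (i : Fin n) : pi2 i i = id := by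
  ext j
  simp only [pi2_val, id]
  split_ifs <;> omega

lemma pi1_id {n : ℕ} (i : Fin n) : pi1 i i = id := by
  ext j
  simp only [pi1_val, id]
  split_ifs <;> omega

lemma phase1 {n : ℕ} {T : ℕ → P n →ₗ[K] P n} (hT : IsDL n t T) {M c : ℕ} {ν : Fin n → ℕ}
    (i : Fin n) {f : P n} {v : K} (h : Good M c ν id f v) (m : ℕ) : ∀ p, p + m = i →
    Good M c ν (pi1 i p)
      ((List.range' p m).foldr (fun k acc => Tinv n t T k ∘ₗ acc) LinearMap.id f)
      ((t ^ (univ.filter fun k : Fin n => p ≤ (k : ℕ) ∧ k < i ∧ ν i ≤ ν k).card)⁻¹ * v) := by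
  induction m with
  | zero =>
    intro p hp
    have : p = i := by omega
    subst this
    rw [pi1_id]
    have : (univ.filter fun k : Fin n => (i : ℕ) ≤ (k : ℕ) ∧ k < i ∧ ν i ≤ ν k) = ∅ := by
      ext k; simp; intro h1 h2; omega
    rw [this]
    simpa using h
  | succ m ih =>
    intro p hp
    have hk : p + 1 < n := by omega
    have h1 := ih (p + 1) (by omega)
    rw [pi1_step i p (by omega) hk, List.range'_succ, List.foldr_cons, LinearMap.comp_apply]
    have ea : pi1 i (p + 1) (pa hk) = pa hk := by
      ext; simp [pi1_val, pa]
    have eb : pi1 i (p + 1) (pb hk) = i := by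
      ext; simp [pi1_val, pb]
    have h2 := Good_Tinv hT hk h1 (by rw [ea, eb, Fin.lt_def]; simp [pa]; omega)
    rw [ea, eb] at h2
    convert h2 using 1
    by_cases h3 : ν i ≤ ν (pa hk)
    · have : (univ.filter fun k : Fin n => p ≤ (k : ℕ) ∧ k < i ∧ ν i ≤ ν k) =
        insert (pa hk) (univ.filter fun k : Fin n => p + 1 ≤ (k : ℕ) ∧ k < i ∧ ν i ≤ ν k) := by
        ext k
        simp only [mem_filter, mem_univ, true_and, mem_insert]
        by_cases hkp : k = pa hk
        · subst hkp
          have h4 : pa hk < i := by rw [Fin.lt_def]; simp only [pa]; omega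
          have h5 : ((pa hk : Fin n) : ℕ) = p := rfl
          simp only [h3, h4, h5, le_refl, true_and, true_or]
        · have : (k : ℕ) ≠ p := fun h => hkp (Fin.ext h)
          simp only [hkp, false_or]
          constructor
          · rintro ⟨h1, h2⟩; exact ⟨by omega, h2⟩
          · rintro ⟨h1, h2⟩; exact ⟨by omega, h2⟩
      rw [this, card_insert_of_notMem (by simp [pa]), if_pos h3, pow_succ, mul_inv]
      ring
    · have : (univ.filter fun k : Fin n => p ≤ (k : ℕ) ∧ k < i ∧ ν i ≤ ν k) =
        (univ.filter fun k : Fin n => p + 1 ≤ (k : ℕ) ∧ k < i ∧ ν i ≤ ν k) := by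
        ext k
        simp only [mem_filter, mem_univ, true_and]
        by_cases hkp : k = pa hk
        · subst hkp; simp [h3]
        · have : (k : ℕ) ≠ p := fun h => hkp (Fin.ext h)
          constructor
          · rintro ⟨h1, h2⟩; exact ⟨by omega, h2⟩
          · rintro ⟨h1, h2⟩; exact ⟨by omega, h2⟩
      rw [this, if_neg h3, one_mul]

lemma phase2 {n : ℕ} {T : ℕ → P n →ₗ[K] P n} (hT : IsDL n t T) {M c : ℕ} {ν : Fin n → ℕ}
    (i : Fin n) {f : P n} {v : K} (h : Good M c ν (pi2 i (n - 1)) f v) (m : ℕ) :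
    ∀ p, p + m = n - 1 → i ≤ p →
    Good M c ν (pi2 i p)
      ((List.range' p m).foldr (fun k acc => T k ∘ₗ acc) LinearMap.id f)
      (t ^ (univ.filter fun k : Fin n => p < (k : ℕ) ∧ ν k ≤ ν i).card * v) := by
  induction m with
  | zero =>
    intro p hp _
    have : p = n - 1 := by omega
    subst this
    have : (univ.filter fun k : Fin n => n - 1 < (k : ℕ) ∧ ν k ≤ ν i) = ∅ := by
      ext k; simp; intro h1; omega
    simpa [this] using h
  | succ m ih =>
    intro p hp hip
    have hk : p + 1 < n := by omega
    have h1 := ih (p + 1) (by omega) (by omega)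
    rw [pi2_step i p (by omega) hk, List.range'_succ, List.foldr_cons, LinearMap.comp_apply]
    have ea : pi2 i (p + 1) (pa hk) = pb hk := by
      ext; simp only [pi2_val, pa, pb]; split_ifs <;> omega
    have eb : pi2 i (p + 1) (pb hk) = i := by
      ext; simp [pi2_val, pb]; omega
    have h2 := Good_T hT hk h1 (by rw [ea, eb, Fin.lt_def]; simp [pb]; omega)
    rw [ea, eb] at h2
    convert h2 using 1
    by_cases h3 : ν (pb hk) ≤ ν i
    · have : (univ.filter fun k : Fin n => p < (k : ℕ) ∧ ν k ≤ ν i) =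
        insert (pb hk) (univ.filter fun k : Fin n => p + 1 < (k : ℕ) ∧ ν k ≤ ν i) := by
        ext k
        simp only [mem_filter, mem_univ, true_and, mem_insert]
        by_cases hkp : k = pb hk
        · subst hkp
          have h5 : ((pb hk : Fin n) : ℕ) = p + 1 := rfl
          simp [h3, h5]
        · have : (k : ℕ) ≠ p + 1 := fun h => hkp (Fin.ext h)
          simp only [hkp, false_or]
          constructor
          · rintro ⟨h1, h2⟩; exact ⟨by omega, h2⟩
          · rintro ⟨h1, h2⟩; exact ⟨by omega, h2⟩
      rw [this, card_insert_of_notMem (by simp [pb]), if_pos h3, pow_succ]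
      ring
    · have : (univ.filter fun k : Fin n => p < (k : ℕ) ∧ ν k ≤ ν i) =
        (univ.filter fun k : Fin n => p + 1 < (k : ℕ) ∧ ν k ≤ ν i) := by
        ext k
        simp only [mem_filter, mem_univ, true_and]
        by_cases hkp : k = pb hk
        · subst hkp; simp [h3]
        · have : (k : ℕ) ≠ p + 1 := fun h => hkp (Fin.ext h)
          constructor
          · rintro ⟨h1, h2⟩; exact ⟨by omega, h2⟩
          · rintro ⟨h1, h2⟩; exact ⟨by omega, h2⟩
      rw [this, if_neg h3, one_mul]

/-- triangularity of Y_i -/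
lemma cf_Y {n : ℕ} {T : ℕ → P n →ₗ[K] P n} (hT : IsDL n t T) (i : Fin n) (f : P n)
    (ν : Fin n → ℕ) (h : Sup (NN ν) (∑ j : Fin n, (j : ℕ) * ν j) (fun j => (j : ℕ)) f) :
    cf (Yop n q t T i f) ν = q ^ ν i / t ^ legCo n ν i * cf f ν := by
  have hn : 0 < n := by have := i.isLt; omega
  have g0 : Good (NN ν) (∑ j : Fin n, (j : ℕ) * ν j) ν id f (cf f ν) := ⟨h, rfl, rfl, rfl⟩
  have g1 := phase1 hT i g0 i 0 (by omega)
  have g2 := Good_om hn g1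
  rw [pi12] at g2
  have g3 := phase2 hT i g2 (n - 1 - i) i (by omega) le_rfl
  rw [pi2_id] at g3
  have g4 := g3.2.2.2
  rw [Yop, LinearMap.smul_apply, cf_smul, LinearMap.comp_apply, LinearMap.comp_apply,
    omegaOp_eq hn, List.range_eq_range']
  rw [Function.comp_id] at g4
  rw [g4]
  have e1 : pi1 i 0 ⟨0, hn⟩ = i := by ext; simp [pi1_val]
  have ht := t_ne
  rw [e1, legCo]
  have e2 : (n - 1 - i : ℕ) = (univ.filter fun k : Fin n => (i : ℕ) < (k : ℕ) ∧ ν k ≤ ν i).card +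
      (univ.filter fun k : Fin n => i < k ∧ ν i < ν k).card := by
    have h1 : n - 1 - (i : ℕ) = (Finset.Ioi i).card := by simp
    rw [h1, ← Finset.card_union_of_disjoint]
    · congr 1
      ext k; simp only [mem_Ioi, mem_union, mem_filter, mem_univ, true_and, Fin.lt_def]
      have := le_or_gt (ν k) (ν i)
      tauto
    · rw [Finset.disjoint_left]
      intro k; simp; intro _ h1 _; exact h1
  rw [e2, pow_add, pow_add]
  have e3 : (univ.filter fun k : Fin n => 0 ≤ (k : ℕ) ∧ k < i ∧ ν i ≤ ν k) =
    univ.filter fun k : Fin n => k < i ∧ ν i ≤ ν k := by simp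
  rw [e3]
  field_simp


/-- T_k in the fraction field -/
lemma T_frac {n : ℕ} {T : ℕ → P n →ₗ[K] P n} (hT : IsDL n t T) {k : ℕ} (hk : k + 1 < n) (f : P n) :
    (algebraMap (P n) (FractionRing (P n))) (T k f) =
    algebraMap (P n) (FractionRing (P n)) (C t) * algebraMap (P n) (FractionRing (P n)) f +
    (algebraMap (P n) (FractionRing (P n)) (C t) * algebraMap (P n) (FractionRing (P n)) (X (pa hk))
      - algebraMap (P n) (FractionRing (P n)) (X (pb hk))) /
    (algebraMap (P n) (FractionRing (P n)) (X (pa hk))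
      - algebraMap (P n) (FractionRing (P n)) (X (pb hk))) *
    (algebraMap (P n) (FractionRing (P n)) (sA hk f) - algebraMap (P n) (FractionRing (P n)) f) := by
  have h := congrArg (algebraMap (P n) (FractionRing (P n))) (DL_eq hT hk f)
  simp only [map_mul, map_add, map_sub] at h
  have hne : (algebraMap (P n) (FractionRing (P n)) (X (pa hk))
      - algebraMap (P n) (FractionRing (P n)) (X (pb hk))) ≠ 0 := by
    rw [← map_sub]
    exact fun h => Xsub_ne (pa_ne_pb hk) ((IsFractionRing.injective (P n) (FractionRing (P n)))
      (h.trans (map_zero _).symm))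
  field_simp
  linear_combination h

lemma perm_T_frac {n : ℕ} {T : ℕ → P n →ₗ[K] P n} (hT : IsDL n t T) {k : ℕ} (hk : k + 1 < n)
    (σ : Equiv.Perm (Fin n)) (f : P n) :
    (algebraMap (P n) (FractionRing (P n))) (rename σ (T k f)) =
    algebraMap (P n) (FractionRing (P n)) (C t) *
      algebraMap (P n) (FractionRing (P n)) (rename σ f) +
    (algebraMap (P n) (FractionRing (P n)) (C t) *
      algebraMap (P n) (FractionRing (P n)) (X (σ (pa hk)))
      - algebraMap (P n) (FractionRing (P n)) (X (σ (pb hk)))) /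
    (algebraMap (P n) (FractionRing (P n)) (X (σ (pa hk)))
      - algebraMap (P n) (FractionRing (P n)) (X (σ (pb hk)))) *
    (algebraMap (P n) (FractionRing (P n)) (rename (σ * sw hk) f) -
      algebraMap (P n) (FractionRing (P n)) (rename σ f)) := by
  have h := congrArg (fun g => algebraMap (P n) (FractionRing (P n)) (rename σ g)) (DL_eq hT hk f)
  simp only [map_mul, map_add, map_sub, rename_X, rename_C] at h
  have hne : (algebraMap (P n) (FractionRing (P n)) (X (σ (pa hk)))
      - algebraMap (P n) (FractionRing (P n)) (X (σ (pb hk)))) ≠ 0 := by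
    rw [← map_sub]
    exact fun h => Xsub_ne (fun h => pa_ne_pb hk (σ.injective h))
      ((IsFractionRing.injective (P n) (FractionRing (P n))) (h.trans (map_zero _).symm))
  have e : rename σ (sA hk f) = rename (σ * sw hk) f := by
    rw [sA, rename_rename]; rfl
  rw [e] at h
  field_simp
  linear_combination h

lemma frac_ext {n : ℕ} {f g : P n}
    (h : algebraMap (P n) (FractionRing (P n)) f = algebraMap (P n) (FractionRing (P n)) g) :
    f = g := IsFractionRing.injective (P n) (FractionRing (P n)) h

lemma fX_ne {n : ℕ} {a b : Fin n} (h : a ≠ b) : (algebraMap (P n) (FractionRing (P n)) (X a)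
      - algebraMap (P n) (FractionRing (P n)) (X b)) ≠ 0 := by
  rw [← map_sub]
  exact fun h' => Xsub_ne h (frac_ext (h'.trans (map_zero _).symm))

lemma T_quad {n : ℕ} {T : ℕ → P n →ₗ[K] P n} (hT : IsDL n t T) {k : ℕ} (hk : k + 1 < n) (f : P n) :
    T k (T k f) = (t - 1) • T k f + t • f := by
  apply frac_ext
  have h1 := fX_ne (pa_ne_pb hk)
  have h2 := fX_ne (pa_ne_pb hk).symm
  have e0 : ∀ g : P n, sA hk g = rename (sw hk) g := fun g => rfl
  simp only [smul_eq_C_mul, map_add, map_mul, map_sub, C_1, map_one]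
  simp only [T_frac hT hk, e0, perm_T_frac hT hk, sw_a, sw_b]
  have e1 : sw hk * sw hk = 1 := by ext i; simp [sw_sw]
  have e2 : rename (⇑(1 : Equiv.Perm (Fin n))) f = f := by simp
  rw [e1, e2]
  generalize algebraMap (P n) (FractionRing (P n)) f = F
  generalize algebraMap (P n) (FractionRing (P n)) (rename (sw hk) f) = G
  generalize algebraMap (P n) (FractionRing (P n)) (X (pa hk)) = x at *
  generalize algebraMap (P n) (FractionRing (P n)) (X (pb hk)) = y at *
  generalize algebraMap (P n) (FractionRing (P n)) (C t) = u
  field_simp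
  ring

lemma T_Tinv {n : ℕ} {T : ℕ → P n →ₗ[K] P n} (hT : IsDL n t T) {k : ℕ} (hk : k + 1 < n) (f : P n) :
    T k (Tinv n t T k f) = f := by
  have ht := t_ne
  have hC : (C t⁻¹ * C t : P n) = 1 := by rw [← C_mul, inv_mul_cancel₀ ht, C_1]
  simp only [Tinv, LinearMap.add_apply, LinearMap.sub_apply, LinearMap.smul_apply,
    LinearMap.id_apply, map_add, map_sub, map_smul, T_quad hT hk]
  simp only [smul_eq_C_mul, map_sub, C_1]
  generalize T k f = g
  linear_combination (g + f) * hC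

lemma Tinv_T {n : ℕ} {T : ℕ → P n →ₗ[K] P n} (hT : IsDL n t T) {k : ℕ} (hk : k + 1 < n) (f : P n) :
    Tinv n t T k (T k f) = f := by
  have ht := t_ne
  have hC : (C t⁻¹ * C t : P n) = 1 := by rw [← C_mul, inv_mul_cancel₀ ht, C_1]
  simp only [Tinv, LinearMap.add_apply, LinearMap.sub_apply, LinearMap.smul_apply,
    LinearMap.id_apply, T_quad hT hk]
  simp only [smul_eq_C_mul, map_sub, C_1]
  generalize T k f = g
  linear_combination (g + f) * hC

lemma T_comm {n : ℕ} {T : ℕ → P n →ₗ[K] P n} (hT : IsDL n t T) {k l : ℕ} (hk : k + 1 < n)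
    (hl : l + 1 < n) (hkl : k + 1 < l) (f : P n) : T k (T l f) = T l (T k f) := by
  apply frac_ext
  have h1 := fX_ne (pa_ne_pb hk)
  have h2 := fX_ne (pa_ne_pb hl)
  have e0 : ∀ g : P n, sA hk g = rename (sw hk) g := fun g => rfl
  have e0' : ∀ g : P n, sA hl g = rename (sw hl) g := fun g => rfl
  have a1 : sw hk (pa hl) = pa hl := sw_of_ne hk (by simp [pa]; omega) (by simp [pa, pb]; omega)
  have a2 : sw hk (pb hl) = pb hl := sw_of_ne hk (by simp [pa, pb]; omega) (by simp [pb]; omega)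
  have a3 : sw hl (pa hk) = pa hk := sw_of_ne hl (by simp [pa]; omega) (by simp [pa, pb]; omega)
  have a4 : sw hl (pb hk) = pb hk := sw_of_ne hl (by simp [pa, pb]; omega) (by simp [pb]; omega)
  simp only [T_frac hT hk, T_frac hT hl, e0, e0', perm_T_frac hT hk, perm_T_frac hT hl, a1, a2,
    a3, a4]
  have e1 : sw hk * sw hl = sw hl * sw hk := by
    ext i; simp only [Equiv.Perm.mul_apply, sw_val]; split_ifs <;> omega
  rw [e1]
  field_simp
  ring

/-- divided difference step -/
noncomputable def DD {F : Type*} [Field F] (u x y f g : F) : F := u * f + (u * x - y) / (x - y) * (g - f)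

/-- braid relation in a field -/
lemma DD_braid {F : Type*} [Field F] (u x y z f0 f1 f2 f12 f21 f3 : F) (h1 : x - y ≠ 0)
    (h2 : y - z ≠ 0) (h3 : x - z ≠ 0) :
    DD u x y (DD u y z (DD u x y f0 f1) (DD u x z f2 f21))
      (DD u x z (DD u y x f1 f0) (DD u y z f12 f3)) =
    DD u y z (DD u x y (DD u y z f0 f2) (DD u x z f1 f12))
      (DD u x z (DD u z y f2 f0) (DD u x y f21 f3)) := by
  have h1' : y - x ≠ 0 := fun h => h1 (by linear_combination -h)
  have h2' : z - y ≠ 0 := fun h => h2 (by linear_combination -h)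
  have e1 : (u * y - x) / (y - x) = u + 1 - (u * x - y) / (x - y) := by field_simp; ring
  have e2 : (u * z - y) / (z - y) = u + 1 - (u * y - z) / (y - z) := by field_simp; ring
  have key : (u * x - z) / (x - z) * ((u * x - y) / (x - y) + (u * y - z) / (y - z) - (u + 1)) =
      (u * x - y) / (x - y) * ((u * y - z) / (y - z)) - u := by field_simp; ring
  simp only [DD, e1, e2]
  generalize (u * x - y) / (x - y) = a at *
  generalize (u * y - z) / (y - z) = b at *
  generalize (u * x - z) / (x - z) = c at *
  linear_combination (f0 * (a - b) - a * f1 + b * f2) * key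

/-- image of a renamed polynomial in the fraction field -/
noncomputable def act {n : ℕ} (σ : Equiv.Perm (Fin n)) (f : P n) : FractionRing (P n) :=
  algebraMap (P n) (FractionRing (P n)) (rename σ f)

noncomputable def xx {n : ℕ} (i : Fin n) : FractionRing (P n) :=
  algebraMap (P n) (FractionRing (P n)) (X i)

noncomputable def uu (n : ℕ) : FractionRing (P n) :=
  algebraMap (P n) (FractionRing (P n)) (C t)

lemma act_T {n : ℕ} {T : ℕ → P n →ₗ[K] P n} (hT : IsDL n t T) {k : ℕ} (hk : k + 1 < n)
    (σ : Equiv.Perm (Fin n)) (f : P n) :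
    act σ (T k f) = DD (uu n) (xx (σ (pa hk))) (xx (σ (pb hk))) (act σ f) (act (σ * sw hk) f) :=
  perm_T_frac hT hk σ f

lemma act_ext {n : ℕ} {f g : P n} (h : act 1 f = act 1 g) : f = g := by
  have e4 : ∀ f : P n, rename (⇑(1 : Equiv.Perm (Fin n))) f = f := by simp
  rw [act, act, e4, e4] at h
  exact frac_ext h

lemma braid_abs {n : ℕ} {T : ℕ → P n →ₗ[K] P n} {k : ℕ} (hk : k + 1 < n) (hl : k + 1 + 1 < n)
    {F : Type*} [Field F] (A : Equiv.Perm (Fin n) → P n → F) (x : Fin n → F) (u : F)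
    (hx : ∀ i j, i ≠ j → x i - x j ≠ 0)
    (r1 : ∀ σ f, A σ (T k f) = DD u (x (σ (pa hk))) (x (σ (pb hk))) (A σ f) (A (σ * sw hk) f))
    (r2 : ∀ σ f, A σ (T (k + 1) f) =
      DD u (x (σ (pa hl))) (x (σ (pb hl))) (A σ f) (A (σ * sw hl) f)) (f : P n) :
    A 1 (T k (T (k + 1) (T k f))) = A 1 (T (k + 1) (T k (T (k + 1) f))) := by
  have hab : pb hk = pa hl := rfl
  have n1 : pa hk ≠ pa hl := pa_ne_pb hk
  have n2 : pa hl ≠ pb hl := pa_ne_pb hl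
  have n3 : pa hk ≠ pb hl := by simp [pa, pb]; omega
  have a1 : sw hk (pa hk) = pa hl := sw_a hk
  have a2 : sw hk (pa hl) = pa hk := sw_b hk
  have a3 : sw hk (pb hl) = pb hl := sw_of_ne hk n3.symm n2.symm
  have a4 : sw hl (pa hl) = pb hl := sw_a hl
  have a5 : sw hl (pb hl) = pa hl := sw_b hl
  have a6 : sw hl (pa hk) = pa hk := sw_of_ne hl n1 n3
  have e1 : sw hk * sw hk = 1 := by ext i; simp [sw_sw]
  have e2 : sw hl * sw hl = 1 := by ext i; simp [sw_sw]
  have e3 : sw hk * sw hl * sw hk = sw hl * sw hk * sw hl := by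
    refine Equiv.ext fun i => ?_
    simp only [Equiv.Perm.mul_apply]
    by_cases c1 : i = pa hk
    · rw [c1, a1, a4, a3, a6, a1, a4]
    by_cases c2 : i = pa hl
    · rw [c2, a2, a6, a1, a4, a3, a5]
    by_cases c3 : i = pb hl
    · rw [c3, a3, a5, a2, a6]
    have b1 : sw hk i = i := sw_of_ne hk c1 c2
    have b2 : sw hl i = i := sw_of_ne hl c2 c3
    rw [b1, b2, b1, b2]
  simp only [r1, r2, one_mul, hab, Equiv.Perm.mul_apply, Equiv.Perm.one_apply, a1, a2, a3, a4, a5,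
    a6, e1, e2, e3]
  exact DD_braid _ _ _ _ _ _ _ _ _ _ (hx _ _ n1) (hx _ _ n2) (hx _ _ n3)

lemma T_braid {n : ℕ} {T : ℕ → P n →ₗ[K] P n} (hT : IsDL n t T) {k : ℕ} (hk : k + 1 < n)
    (hl : k + 1 + 1 < n) (f : P n) :
    T k (T (k + 1) (T k f)) = T (k + 1) (T k (T (k + 1) f)) := by
  apply act_ext
  exact braid_abs hk hl act xx (uu n) (fun i j h => fX_ne h) (act_T hT hk) (act_T hT hl) f

lemma om_X {n : ℕ} (hn : 0 < n) (j : Fin n) (hj : (j : ℕ) ≠ 0) :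
    om hn (X j) = X (rotF (n - 1) (by omega) j) := by
  rw [om, aeval_X, if_neg hj]

lemma om_T {n : ℕ} {T : ℕ → P n →ₗ[K] P n} (hT : IsDL n t T) {k : ℕ} (hn : 0 < n) (hk : k + 1 < n)
    (hl : k + 1 + 1 < n) (f : P n) : om hn (T (k + 1) f) = T k (om hn f) := by
  symm
  apply T_unique hT hk
  have h := congrArg (om hn) (DL_eq hT hl f)
  simp only [map_mul, map_add, map_sub] at h
  have r1 : rotF (n - 1) (by omega) (pa hl) = pa hk := by
    ext; simp [rotF, pa]; split_ifs <;> simp; omega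
  have r2 : rotF (n - 1) (by omega) (pb hl) = pb hk := by
    ext; simp [rotF, pb]; split_ifs <;> simp; omega
  rw [om_X hn _ (by simp [pa]), om_X hn _ (by simp [pb]), r1, r2] at h
  have hC : om hn (C t) = C t := by simp [om]
  have hs : om hn (sA hl f) = sA hk (om hn f) := by
    have : (om hn).comp (sA hl) = (sA hk).comp (om hn) := by
      apply MvPolynomial.algHom_ext
      intro j
      rw [AlgHom.comp_apply, AlgHom.comp_apply, sA_X]
      have hr : sw hk (rotF (n - 1) (by omega) j) = rotF (n - 1) (by omega) (sw hl j) := by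
        have h1 : sw hl ((cycE hn) ((cycE hn).symm j)) = cycE hn (sw hk ((cycE hn).symm j)) := by
          generalize (cycE hn).symm j = i
          change sw hl (cyc hn i) = cyc hn (sw hk i)
          have := i.isLt
          have h1 := cyc_val hn i
          have h2 := cyc_val hn (sw hk i)
          have h3 := sw_val hk i
          have h4 := sw_val hl (cyc hn i)
          ext
          generalize ((sw hl (cyc hn i) : Fin n) : ℕ) = a at *
          generalize ((cyc hn (sw hk i) : Fin n) : ℕ) = b at *
          generalize ((sw hk i : Fin n) : ℕ) = c at *
          generalize ((cyc hn i : Fin n) : ℕ) = d at *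
          split_ifs at * <;> omega
        rw [Equiv.apply_symm_apply] at h1
        rw [h1]
        exact ((cycE hn).symm_apply_apply _).symm
      have hz : ((sw hl j : Fin n) : ℕ) = 0 ↔ (j : ℕ) = 0 := by
        have h9 := sw_val hl j
        constructor <;> intro h <;> rw [h9] at * <;> split_ifs at * <;> omega
      rw [om, aeval_X, aeval_X]
      by_cases hj : (j : ℕ) = 0
      · rw [if_pos hj, if_pos (hz.mpr hj), map_mul, sA_X, hr]
        simp [sA]
      · rw [if_neg hj, if_neg (fun h => hj (hz.mp h)), sA_X, hr]
    exact congrArg (fun g : P n →ₐ[K] P n => g f) this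
  rw [hC, hs] at h
  exact h


/-- product T_a T_{a+1} ... -/
noncomputable def PT {n : ℕ} (T : ℕ → P n →ₗ[K] P n) (a m : ℕ) : P n →ₗ[K] P n :=
  (List.range' a m).foldr (fun k acc => T k ∘ₗ acc) LinearMap.id

noncomputable def PI {n : ℕ} (T : ℕ → P n →ₗ[K] P n) (m : ℕ) : P n →ₗ[K] P n :=
  (List.range m).foldr (fun k acc => Tinv n t T k ∘ₗ acc) LinearMap.id

lemma PT_zero {n : ℕ} (T : ℕ → P n →ₗ[K] P n) (a : ℕ) (f : P n) : PT T a 0 f = f := rfl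

lemma PT_succ {n : ℕ} (T : ℕ → P n →ₗ[K] P n) (a m : ℕ) (f : P n) :
    PT T a (m + 1) f = T a (PT T (a + 1) m f) := by
  rw [PT, List.range'_succ]; rfl

lemma PI_zero {n : ℕ} (T : ℕ → P n →ₗ[K] P n) (f : P n) : PI T 0 f = f := rfl

lemma foldr_comp {n : ℕ} (U : ℕ → P n →ₗ[K] P n) (l : List ℕ) (A : P n →ₗ[K] P n) (f : P n) :
    l.foldr (fun k acc => U k ∘ₗ acc) A f = l.foldr (fun k acc => U k ∘ₗ acc) LinearMap.id (A f) := by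
  induction l with
  | nil => rfl
  | cons x l ih => simp only [List.foldr_cons, LinearMap.comp_apply, ih]

lemma PI_succ {n : ℕ} (T : ℕ → P n →ₗ[K] P n) (m : ℕ) (f : P n) :
    PI T (m + 1) f = PI T m (Tinv n t T m f) := by
  rw [PI, List.range_succ, List.foldr_append, foldr_comp]
  rfl

lemma Yop_eq {n : ℕ} (hn : 0 < n) (T : ℕ → P n →ₗ[K] P n) (i : Fin n) (f : P n) :
    Yop n q t T i f = (t ^ (n - 1 - (i : ℕ)))⁻¹ • PT T i (n - 1 - i) (om hn (PI T i f)) := by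
  rw [Yop, LinearMap.smul_apply, LinearMap.comp_apply, LinearMap.comp_apply, omegaOp_eq hn]
  rfl

lemma Tinv_comm {n : ℕ} {T : ℕ → P n →ₗ[K] P n} {k l : ℕ}
    (h : ∀ f, T k (T l f) = T l (T k f)) (f : P n) :
    T k (Tinv n t T l f) = Tinv n t T l (T k f) := by
  simp only [Tinv, LinearMap.add_apply, LinearMap.sub_apply, LinearMap.smul_apply,
    LinearMap.id_apply, map_add, map_sub, map_smul, h]

lemma PT_far {n : ℕ} {T : ℕ → P n →ₗ[K] P n} (hT : IsDL n t T) {k : ℕ} (m : ℕ) :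
    ∀ a f, k + 1 < a → a + m < n → T k (PT T a m f) = PT T a m (T k f) := by
  induction m with
  | zero => intros; rfl
  | succ m ih =>
    intro a f h1 h2
    rw [PT_succ, PT_succ, T_comm hT (by omega) (by omega) h1, ih (a + 1) f (by omega) (by omega)]

lemma PT_braid {n : ℕ} {T : ℕ → P n →ₗ[K] P n} (hT : IsDL n t T) {k : ℕ} (m : ℕ) :
    ∀ a f, a ≤ k → k + 1 < a + m → a + m < n →
      T (k + 1) (PT T a m f) = PT T a m (T k f) := by
  induction m with
  | zero => intros; omega
  | succ m ih =>
    intro a f h1 h2 h3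
    rcases h1.lt_or_eq with h1 | h1
    · rw [PT_succ, PT_succ, ← T_comm hT (by omega) (by omega) (by omega),
        ih (a + 1) f (by omega) (by omega) (by omega)]
    · subst h1
      obtain ⟨m, rfl⟩ : ∃ m', m = m' + 1 := ⟨m - 1, by omega⟩
      rw [PT_succ, PT_succ, PT_succ, PT_succ, ← T_braid hT (by omega) (by omega),
        PT_far hT m _ _ (by omega) (by omega)]

lemma PI_far {n : ℕ} {T : ℕ → P n →ₗ[K] P n} (hT : IsDL n t T) {k : ℕ} (hk : k + 1 < n) (m : ℕ) :
    ∀ f, m < k → T k (PI T m f) = PI T m (T k f) := by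
  induction m with
  | zero => intros; rfl
  | succ m ih =>
    intro f h
    rw [PI_succ, PI_succ, ih _ (by omega),
      Tinv_comm (fun f => (T_comm hT (by omega) (by omega) (by omega) f).symm)]

lemma PI_braid {n : ℕ} {T : ℕ → P n →ₗ[K] P n} (hT : IsDL n t T) {k : ℕ} (m : ℕ) :
    ∀ f, k + 1 < m → m < n → T (k + 1) (PI T m f) = PI T m (T k f) := by
  induction m with
  | zero => intros; omega
  | succ m ih =>
    intro f h1 h2
    rcases (Nat.lt_succ_iff.mp h1).lt_or_eq with h | h
    · rw [PI_succ, PI_succ, ih _ (by omega) (by omega),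
        Tinv_comm (fun f => (T_comm hT (by omega) (by omega) (by omega) f))]
    · subst h
      rw [PI_succ, PI_succ, PI_succ, PI_succ, PI_far hT (by omega) k _ (by omega)]
      congr 1
      have hk : k + 1 < n := by omega
      have hl : k + 1 + 1 < n := by omega
      obtain ⟨g, rfl⟩ : ∃ g, f = T (k + 1) (T k g) :=
        ⟨Tinv n t T k (Tinv n t T (k + 1) f), by rw [T_Tinv hT hk, T_Tinv hT hl]⟩
      rw [Tinv_T hT hl, Tinv_T hT hk, T_braid hT hk hl, Tinv_T hT hl, Tinv_T hT hk]

lemma Y_rel {n : ℕ} {T : ℕ → P n →ₗ[K] P n} (hT : IsDL n t T) {k : ℕ} (hk : k + 1 < n) (f : P n) :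
    T k (Yop n q t T (pb hk) (T k f)) = t • Yop n q t T (pa hk) f := by
  have hn : 0 < n := by omega
  have ht := t_ne
  rw [Yop_eq hn, Yop_eq hn]
  simp only [pa, pb]
  obtain ⟨m, hm⟩ : ∃ m, n - 1 - k = m + 1 := ⟨n - 1 - k - 1, by omega⟩
  have hm' : n - 1 - (k + 1) = m := by omega
  rw [hm, hm', PI_succ, Tinv_T hT hk, PT_succ, map_smul, smul_smul]
  congr 1
  rw [pow_succ]; field_simp

lemma Y_comm {n : ℕ} {T : ℕ → P n →ₗ[K] P n} (hT : IsDL n t T) {k : ℕ} (hk : k + 1 < n)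
    (j : Fin n) (h1 : j ≠ pa hk) (h2 : j ≠ pb hk) (f : P n) :
    T k (Yop n q t T j f) = Yop n q t T j (T k f) := by
  have hn : 0 < n := by omega
  have h1' : (j : ℕ) ≠ k := fun h => h1 (Fin.ext h)
  have h2' : (j : ℕ) ≠ k + 1 := fun h => h2 (Fin.ext h)
  have := j.isLt
  rw [Yop_eq hn, Yop_eq hn, map_smul]
  congr 1
  rcases lt_or_gt_of_ne h1' with h | h
  · obtain ⟨l, rfl⟩ : ∃ l, k = l + 1 := ⟨k - 1, by omega⟩
    rw [PT_braid hT _ _ _ (by omega) (by omega) (by omega), ← om_T hT hn (by omega) (by omega),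
      PI_far hT hk _ _ h]
  · rw [PT_far hT _ _ _ (by omega) (by omega), ← om_T hT hn (by omega) (by omega),
      PI_braid hT _ _ (by omega) (by omega)]


lemma qt_eq (a b : ℕ) : q ^ a * t ^ b = algebraMap (MvPolynomial (Fin 2) ℚ) K
    (monomial (Finsupp.single 0 a + Finsupp.single 1 b) 1) := by
  rw [q, t, ← map_pow, ← map_pow, ← map_mul, X_pow_eq_monomial, X_pow_eq_monomial, monomial_mul,
    one_mul]

lemma K_inj {f g : MvPolynomial (Fin 2) ℚ} (h : algebraMap (MvPolynomial (Fin 2) ℚ) K f =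
    algebraMap (MvPolynomial (Fin 2) ℚ) K g) : f = g :=
  IsFractionRing.injective (MvPolynomial (Fin 2) ℚ) K h

lemma expo_inj {a b c d : ℕ} : ((Finsupp.single 0 a + Finsupp.single 1 b : Fin 2 →₀ ℕ) =
    Finsupp.single 0 c + Finsupp.single 1 d) ↔ (a = c ∧ b = d) := by
  constructor
  · intro h
    have h0 := DFunLike.congr_fun h 0
    have h1 := DFunLike.congr_fun h 1
    simp at h0 h1
    exact ⟨h0, h1⟩
  · rintro ⟨rfl, rfl⟩; rfl

lemma qt_inj {a b c d : ℕ} (h : q ^ a * t ^ b = q ^ c * t ^ d) : a = c ∧ b = d := by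
  rw [qt_eq, qt_eq] at h
  have h1 := monomial_left_injective (one_ne_zero) (K_inj h)
  exact expo_inj.mp h1

lemma qt_inj' {a b c d : ℕ} (h : q ^ a / t ^ b = q ^ c / t ^ d) : a = c ∧ b = d := by
  have ht := t_ne
  rw [div_eq_div_iff (pow_ne_zero _ ht) (pow_ne_zero _ ht)] at h
  have := qt_inj h
  omega

lemma one_sub_ne {a b : ℕ} (ha : 1 ≤ a) : 1 - q ^ a * t ^ b ≠ 0 := by
  intro h
  have h1 : q ^ a * t ^ b = q ^ 0 * t ^ 0 := by simp; linear_combination -h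
  have := qt_inj h1
  omega

lemma t_ne_neg_one : t + 1 ≠ 0 := by
  intro h
  have h1 : algebraMap (MvPolynomial (Fin 2) ℚ) K (X 1 + 1) = algebraMap _ K 0 := by
    rw [map_add, map_one, map_zero]; exact h
  have h2 := congrArg (eval (fun _ => (1 : ℚ))) (K_inj h1)
  norm_num at h2

lemma sum_qt_inj {n : ℕ} (ν κ : Fin n → ℕ)
    (h : ∑ i : Fin n, q ^ ν i / t ^ (i : ℕ) = ∑ i : Fin n, q ^ κ i / t ^ (i : ℕ)) : ν = κ := by
  have ht := t_ne
  have key : ∀ μ : Fin n → ℕ, (∑ i : Fin n, q ^ μ i / t ^ (i : ℕ)) * t ^ n =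
      algebraMap (MvPolynomial (Fin 2) ℚ) K (∑ i : Fin n,
        monomial (Finsupp.single 0 (μ i) + Finsupp.single 1 (n - (i : ℕ))) 1) := by
    intro μ
    rw [Finset.sum_mul, map_sum]
    refine Finset.sum_congr rfl fun i _ => ?_
    rw [← qt_eq]
    have : t ^ n = t ^ (n - (i : ℕ)) * t ^ (i : ℕ) := by rw [← pow_add]; congr 1; omega
    rw [this]
    field_simp
  have h2 := K_inj ((key ν).symm.trans ((congrArg (· * t ^ n) h).trans (key κ)))
  funext i0
  have h3 := congrArg (coeff (Finsupp.single 0 (κ i0) + Finsupp.single 1 (n - (i0 : ℕ)))) h2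
  simp only [coeff_sum, coeff_monomial, expo_inj] at h3
  by_contra hc
  rw [Finset.sum_eq_zero, Finset.sum_eq_single i0] at h3
  · simp at h3
  · intro j _ hj
    rw [if_neg]
    rintro ⟨_, h5⟩
    exact hj (Fin.ext (by omega))
  · simp
  · intro j _
    rw [if_neg]
    rintro ⟨h4, h5⟩
    have : j = i0 := Fin.ext (by omega)
    subst this
    exact hc h4

lemma exists_top {n : ℕ} {f : P n} (hf : f ≠ 0) : ∃ ν : Fin n → ℕ, cf f ν ≠ 0 ∧
    Sup (NN ν) (∑ j : Fin n, (j : ℕ) * ν j) (fun j => (j : ℕ)) f := by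
  classical
  have hne : f.support.Nonempty := support_nonempty.mpr hf
  obtain ⟨m, hm, hmax⟩ := f.support.exists_max_image (fun m => NN (m : Fin n → ℕ)) hne
  have hne2 : (f.support.filter fun r : Fin n →₀ ℕ => NN (r : Fin n → ℕ) = NN (m : Fin n → ℕ)).Nonempty :=
    ⟨m, mem_filter.mpr ⟨hm, rfl⟩⟩
  obtain ⟨r, hr, hmin⟩ := exists_min_image _
    (fun r : Fin n →₀ ℕ => ∑ j : Fin n, (j : ℕ) * r j) hne2
  rw [mem_filter] at hr
  refine ⟨r, ?_, ?_⟩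
  · have := mem_support_iff.mp hr.1
    simpa [cf] using this
  · intro ρ hρ
    have hs : Finsupp.equivFunOnFinite.symm ρ ∈ f.support := mem_support_iff.mpr hρ
    have h1 := hmax _ hs
    have h2 := hmin (Finsupp.equivFunOnFinite.symm ρ)
    simp only [mem_filter, hs, true_and] at h2
    simp only [Finsupp.coe_equivFunOnFinite_symm] at h1 h2
    rw [hr.2]
    rcases h1.lt_or_eq with h | h
    · exact Or.inl h
    · exact Or.inr ⟨h, h2 h⟩

lemma eig_unique {n : ℕ} {T : ℕ → P n →ₗ[K] P n} (hT : IsDL n t T) (η : Fin n → ℕ) (f : P n)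
    (h : ∀ i, Yop n q t T i f = (q ^ η i / t ^ legCo n η i) • f) (h0 : cf f η = 0) : f = 0 := by
  by_contra hf
  obtain ⟨ν, h1, h2⟩ := exists_top hf
  have : ν = η := by
    funext i
    have h3 := cf_Y hT i f ν h2
    rw [h i, cf_smul] at h3
    exact (qt_inj' (mul_right_cancel₀ h1 h3)).1.symm
  rw [this] at h1
  exact h1 h0

lemma legCo_anti {n : ℕ} (ν : Fin n → ℕ) (h : StrictAnti ν) (i : Fin n) : legCo n ν i = i := by
  have h1 : (univ.filter fun k => k < i ∧ ν i ≤ ν k) = Finset.Iio i := by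
    ext k; simp only [mem_filter, mem_univ, true_and, mem_Iio]
    exact ⟨fun h => h.1, fun hk => ⟨hk, (h hk).le⟩⟩
  have h2 : (univ.filter fun k => i < k ∧ ν i < ν k) = ∅ := by
    ext k; simp only [mem_filter, mem_univ, true_and, notMem_empty, iff_false]
    exact fun hk => absurd (h hk.1) (by omega)
  rw [legCo, h1, h2]
  simp

lemma strictAnti_of_step {n : ℕ} (ν : Fin n → ℕ)
    (h : ∀ k, ∀ hk : k + 1 < n, ν (pb hk) < ν (pa hk)) : StrictAnti ν := by
  have key : ∀ d a : ℕ, ∀ h1 : a < n, ∀ h2 : a + d + 1 < n, ν ⟨a + d + 1, h2⟩ < ν ⟨a, h1⟩ := by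
    intro d
    induction d with
    | zero => intro a h1 h2; exact h a h2
    | succ d ih =>
      intro a h1 h2
      exact (h (a + d + 1) (by omega)).trans (ih a h1 (by omega))
  intro i j hij
  have hij' : (i : ℕ) < j := hij
  have := key (j - i - 1) i i.isLt (by omega)
  have e : (⟨(i : ℕ) + (j - i - 1) + 1, by omega⟩ : Fin n) = j := Fin.ext (by simp; omega)
  rw [e] at this
  exact this

lemma anti_unique {n : ℕ} {T : ℕ → P n →ₗ[K] P n} (hT : IsDL n t T) (κ : Fin n → ℕ) (f : P n)
    (ha : ∀ k, k + 1 < n → T k f = -f)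
    (h : (∑ i : Fin n, Yop n q t T i) f = (∑ i : Fin n, q ^ κ i / t ^ (i : ℕ)) • f)
    (h0 : cf f κ = 0) : f = 0 := by
  by_contra hf
  obtain ⟨ν, h1, h2⟩ := exists_top hf
  have hanti : StrictAnti ν := by
    apply strictAnti_of_step
    intro k hk
    by_contra hc
    push Not at hc
    have h3 : cf (T k f) ν = - cf f ν := by rw [ha k hk, cf_neg]
    rw [cf_T hT hk f ν h2.le] at h3
    rcases hc.lt_or_eq with hc | hc
    · rw [if_pos hc] at h3
      have h4 : cf f (ν ∘ sw hk) = - (t * cf f ν) := by linear_combination h3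
      have h5 : cf f (ν ∘ sw hk) ≠ 0 := by
        rw [h4]; exact neg_ne_zero.mpr (mul_ne_zero t_ne h1)
      have h6 := h2 _ h5
      rw [NN_perm] at h6
      rcases h6 with h6 | h6
      · omega
      · have h7 := dot_sw_lt hk (fun j => (j : ℕ)) (ν ∘ sw hk)
          (Or.inr ⟨by simp [pa, pb], by simpa [Function.comp, sw_a, sw_b] using hc⟩)
        rw [dot_sw', comp_sw_sw] at h7
        exact absurd h6.2 (not_le.mpr h7)
    · rw [if_neg (by omega)] at h3
      have e : ν ∘ sw hk = ν := by
        funext i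
        by_cases e1 : i = pa hk
        · subst e1; simp [sw_a, hc]
        by_cases e2 : i = pb hk
        · subst e2; simp [sw_b, hc]
        simp [sw_of_ne hk e1 e2]
      rw [e] at h3
      exact mul_ne_zero t_ne_neg_one h1 (by linear_combination h3)
  have h3 : cf ((∑ i : Fin n, Yop n q t T i) f) ν =
      (∑ i : Fin n, q ^ ν i / t ^ (i : ℕ)) * cf f ν := by
    rw [LinearMap.sum_apply, cf_sum, Finset.sum_mul]
    refine Finset.sum_congr rfl fun i _ => ?_
    rw [cf_Y hT i f ν h2, legCo_anti ν hanti]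
  rw [h, cf_smul] at h3
  have := sum_qt_inj _ _ (mul_right_cancel₀ h1 h3)
  rw [this] at h0
  exact h1 h0


lemma pa_lt_pb {n k : ℕ} (hk : k + 1 < n) : pa hk < pb hk := by simp [pa, pb]

lemma sw_lt {n k : ℕ} (hk : k + 1 < n) {i j : Fin n} (h : i < j) (h2 : ¬ (i = pa hk ∧ j = pb hk)) :
    sw hk i < sw hk j := by
  have h3 : ¬ ((i : ℕ) = k ∧ (j : ℕ) = k + 1) := fun h => h2 ⟨Fin.ext h.1, Fin.ext h.2⟩
  have h' : (i : ℕ) < j := h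
  have e1 := sw_val hk i
  have e2 := sw_val hk j
  rw [Fin.lt_def]
  split_ifs at e1 e2 <;> omega

lemma inv_mul_sw {n k : ℕ} (hk : k + 1 < n) (σ : Equiv.Perm (Fin n))
    (h : σ (pa hk) < σ (pb hk)) : inversions (σ * sw hk) = inversions σ + 1 := by
  have hab := pa_lt_pb hk
  have key : (univ.filter fun p : Fin n × Fin n => p.1 < p.2 ∧ (σ * sw hk) p.2 < (σ * sw hk) p.1) =
      insert (pa hk, pb hk) ((univ.filter fun p : Fin n × Fin n => p.1 < p.2 ∧ σ p.2 < σ p.1).image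
        (fun p => (sw hk p.1, sw hk p.2))) := by
    ext ⟨i, j⟩
    simp only [mem_filter, mem_univ, true_and, mem_insert, mem_image, Prod.mk.injEq, Prod.exists]
    constructor
    · rintro ⟨h1, h2⟩
      by_cases hc : i = pa hk ∧ j = pb hk
      · exact Or.inl hc
      · exact Or.inr ⟨sw hk i, sw hk j, ⟨sw_lt hk h1 hc, h2⟩, sw_sw hk i, sw_sw hk j⟩
    · rintro (⟨rfl, rfl⟩ | ⟨a, b, ⟨h1, h2⟩, rfl, rfl⟩)
      · rw [Equiv.Perm.mul_apply, Equiv.Perm.mul_apply, sw_a, sw_b]; exact ⟨hab, h⟩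
      · rw [Equiv.Perm.mul_apply, Equiv.Perm.mul_apply, sw_sw, sw_sw]
        refine ⟨sw_lt hk h1 ?_, h2⟩
        rintro ⟨rfl, rfl⟩
        exact absurd h (not_lt.mpr h2.le)
  rw [inversions, key, card_insert_of_notMem, card_image_of_injective]
  · rfl
  · rintro ⟨a, b⟩ ⟨c, d⟩ h
    simpa using h
  · simp only [mem_image, mem_filter, mem_univ, true_and, Prod.mk.injEq, Prod.exists, not_exists,
      not_and]
    intro a b h1 h2 h3
    have e1 : a = pb hk := by rw [← sw_sw hk a, h2, sw_a]
    have e2 : b = pa hk := by rw [← sw_sw hk b, h3, sw_b]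
    subst e1 e2
    exact absurd h1.1 (not_lt.mpr hab.le)

lemma invs_inv {n : ℕ} (σ : Equiv.Perm (Fin n)) : inversions σ⁻¹ = inversions σ := by
  unfold inversions
  refine Finset.card_nbij' (fun p => (σ⁻¹ p.2, σ⁻¹ p.1)) (fun p => (σ p.2, σ p.1)) ?_ ?_ ?_ ?_
  · intro p hp
    simp at hp ⊢
    exact ⟨hp.2, hp.1⟩
  · intro p hp
    simp at hp ⊢
    exact ⟨hp.2, hp.1⟩
  · intro p hp; simp
  · intro p hp; simp

lemma invs_one {n : ℕ} : inversions (1 : Equiv.Perm (Fin n)) = 0 := by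
  rw [inversions, card_eq_zero, Finset.filter_eq_empty_iff]
  rintro p _ ⟨h1, h2⟩
  exact absurd h1 (not_lt.mpr (le_of_lt h2))

lemma exists_descent {n : ℕ} (σ : Equiv.Perm (Fin n)) (h : σ ≠ 1) :
    ∃ k, ∃ hk : k + 1 < n, σ (pb hk) < σ (pa hk) := by
  by_contra hc
  push Not at hc
  apply h
  have h1 : StrictAnti (fun i => n - (σ i : ℕ)) := by
    apply strictAnti_of_step
    intro k hk
    have h2 := hc k hk
    have h3 : σ (pa hk) ≠ σ (pb hk) := fun h => pa_ne_pb hk (σ.injective h)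
    have h4 : σ (pa hk) < σ (pb hk) := lt_of_le_of_ne h2 h3
    have h4' : (σ (pa hk) : ℕ) < σ (pb hk) := h4
    have := (σ (pb hk)).isLt
    omega
  have h2 : StrictMono σ := by
    intro i j hij
    have := h1 hij
    simp only at this
    rw [Fin.lt_def]
    omega
  have h3 : h2.orderIsoOfSurjective σ σ.surjective = OrderIso.refl (Fin n) := Subsingleton.elim _ _
  refine Equiv.ext fun i => ?_
  exact DFunLike.congr_fun h3 i

lemma cf_Tw {n : ℕ} {T : ℕ → P n →ₗ[K] P n} (hT : IsDL n t T)
    {Tw : Equiv.Perm (Fin n) → P n →ₗ[K] P n} (hTw : IsTsigma n T Tw) {κ : Fin n → ℕ}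
    (hκ : StrictAnti κ) (m : ℕ) : ∀ (σ : Equiv.Perm (Fin n)) (f : P n), inversions σ = m →
    (∀ ρ, cf f ρ ≠ 0 → NN ρ ≤ NN κ) → cf (Tw σ f) κ = t ^ m * cf f (κ ∘ σ) := by
  induction m with
  | zero =>
    intro σ f hm hf
    have : σ = 1 := by
      by_contra hc
      obtain ⟨k, hk, h⟩ := exists_descent σ hc
      rw [inversions, card_eq_zero] at hm
      have h2 : ((pa hk, pb hk) : Fin n × Fin n) ∈ (univ.filter fun p : Fin n × Fin n =>
        p.1 < p.2 ∧ σ p.2 < σ p.1) := by simp [h, pa_lt_pb hk]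
      rw [hm] at h2
      simp at h2
    subst this
    rw [hTw.1]
    simp
  | succ m ih =>
    intro σ f hm hf
    have hne : σ ≠ 1 := by
      rintro rfl
      rw [invs_one] at hm
      omega
    obtain ⟨k, hk, h⟩ := exists_descent σ hne
    have hlt : (σ * sw hk) (pa hk) < (σ * sw hk) (pb hk) := by
      rw [Equiv.Perm.mul_apply, Equiv.Perm.mul_apply, sw_a, sw_b]; exact h
    have e : (σ * sw hk) * sw hk = σ := by
      ext i; simp [sw_sw]
    have h1 := inv_mul_sw hk _ hlt
    have h2 := hTw.2 (σ * sw hk) k hk (by rw [sPerm_eq hk]; exact h1)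
    rw [sPerm_eq hk, e] at h2
    rw [e] at h1
    rw [h2, LinearMap.comp_apply, ih _ _ (by omega) (NN_T hT hk f _ hf),
      cf_T hT hk f _ (by rw [NN_perm]; exact hf), if_neg]
    · have e2 : (κ ∘ ⇑(σ * sw hk)) ∘ ⇑(sw hk) = κ ∘ σ := by
        funext i; simp [sw_sw]
      rw [e2]; ring
    · simp only [Function.comp]
      exact not_lt.mpr (hκ hlt).le

lemma cf_Uminus {n : ℕ} {T : ℕ → P n →ₗ[K] P n} (hT : IsDL n t T)
    {Tw : Equiv.Perm (Fin n) → P n →ₗ[K] P n} (hTw : IsTsigma n T Tw) {κ : Fin n → ℕ}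
    (hκ : StrictAnti κ) (μ : Fin n → ℕ) (hμ : NN μ ≤ NN κ) :
    cf (Uminus n t Tw (xmon n μ)) κ = ∑ σ : Equiv.Perm (Fin n),
      ((-t) ^ inversions σ)⁻¹ * (t ^ inversions σ * if μ = κ ∘ σ then 1 else 0) := by
  rw [Uminus, LinearMap.sum_apply, cf_sum]
  refine Finset.sum_congr rfl fun σ _ => ?_
  rw [LinearMap.smul_apply, cf_smul, cf_Tw hT hTw hκ _ σ _ rfl, cf_xmon]
  intro ρ hρ
  rw [cf_xmon] at hρ
  have : μ = ρ := by by_contra hc; simp [hc] at hρ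
  rw [← this]; exact hμ

lemma comp_perm_inj {n : ℕ} {κ : Fin n → ℕ} (hκ : StrictAnti κ) {σ : Equiv.Perm (Fin n)}
    (h : κ = κ ∘ σ) : σ = 1 := by
  ext i
  have := congrFun h i
  rw [← hκ.injective this]; rfl

lemma cf_Uminus_self {n : ℕ} {T : ℕ → P n →ₗ[K] P n} (hT : IsDL n t T)
    {Tw : Equiv.Perm (Fin n) → P n →ₗ[K] P n} (hTw : IsTsigma n T Tw) {κ : Fin n → ℕ}
    (hκ : StrictAnti κ) : cf (Uminus n t Tw (xmon n κ)) κ = 1 := by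
  rw [cf_Uminus hT hTw hκ κ le_rfl, Finset.sum_eq_single 1]
  · simp [invs_one]
  · intro σ _ hσ
    rw [if_neg (fun h => hσ (comp_perm_inj hκ h))]
    simp
  · simp

lemma cf_Uminus_lt {n : ℕ} {T : ℕ → P n →ₗ[K] P n} (hT : IsDL n t T)
    {Tw : Equiv.Perm (Fin n) → P n →ₗ[K] P n} (hTw : IsTsigma n T Tw) {κ : Fin n → ℕ}
    (hκ : StrictAnti κ) {μ : Fin n → ℕ} (hμ : NN μ < NN κ) :
    cf (Uminus n t Tw (xmon n μ)) κ = 0 := by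
  rw [cf_Uminus hT hTw hκ μ hμ.le]
  refine Finset.sum_eq_zero fun σ _ => ?_
  rw [if_neg]
  · simp
  · rintro rfl
    rw [NN_perm] at hμ
    omega

lemma layer {n : ℕ} (μ ν : Fin n → ℕ) (M : ℕ) (hM : ∀ i, μ i ≤ M) :
    ∑ i, ν i * μ i = ∑ c ∈ Finset.Icc 1 M, ∑ i ∈ univ.filter (fun i => c ≤ μ i), ν i := by
  simp only [Finset.sum_filter]
  rw [Finset.sum_comm]
  refine Finset.sum_congr rfl fun i _ => ?_
  rw [← Finset.sum_filter]
  have : (Finset.Icc 1 M).filter (fun c => c ≤ μ i) = Finset.Icc 1 (μ i) := by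
    ext c
    have := hM i
    simp only [mem_filter, mem_Icc]; omega
  rw [this]
  simp [mul_comm]

lemma dom_NN {n : ℕ} {μ ν : Fin n → ℕ} (hμ : Antitone μ) (h : domLT n μ ν) : NN μ < NN ν := by
  obtain ⟨⟨_, h1⟩, h2⟩ := h
  have hdot : ∑ i, μ i * μ i ≤ ∑ i, ν i * μ i := by
    rw [layer μ μ (∑ i, μ i) (fun i => Finset.single_le_sum (fun _ _ => Nat.zero_le _) (mem_univ i)),
      layer μ ν (∑ i, μ i) (fun i => Finset.single_le_sum (fun _ _ => Nat.zero_le _) (mem_univ i))]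
    refine Finset.sum_le_sum fun c _ => ?_
    rcases (univ.filter (fun i => c ≤ μ i)).eq_empty_or_nonempty with he | hne
    · rw [he]; simp
    · have hp := Finset.max'_mem _ hne
      set p := (univ.filter (fun i => c ≤ μ i)).max' hne with hpd
      have : univ.filter (fun i => c ≤ μ i) = univ.filter (· ≤ p) := by
        ext i
        constructor
        · intro hi
          rw [mem_filter]
          exact ⟨mem_univ i, Finset.le_max' _ _ hi⟩
        · intro hi
          rw [mem_filter] at hi hp ⊢
          exact ⟨mem_univ i, hp.2.trans (hμ hi.2)⟩
      rw [this]
      exact h1 p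
  have hpos : 0 < ∑ i, ((ν i : ℤ) - μ i) ^ 2 := by
    obtain ⟨i, hi⟩ := Function.ne_iff.mp h2
    refine Finset.sum_pos' (fun i _ => sq_nonneg _) ⟨i, mem_univ i, ?_⟩
    have : (ν i : ℤ) - μ i ≠ 0 := by omega
    positivity
  have e : ∑ i, ((ν i : ℤ) - μ i) ^ 2 = (NN ν : ℤ) - 2 * ((∑ i, ν i * μ i : ℕ) : ℤ) + NN μ := by
    simp only [NN]
    push_cast
    rw [Finset.mul_sum, ← Finset.sum_sub_distrib, ← Finset.sum_add_distrib]
    exact Finset.sum_congr rfl fun i _ => by ring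
  have e2 : ∑ i, μ i * μ i = NN μ := by simp [NN, sq]
  rw [e2] at hdot
  zify at hdot ⊢
  push_cast at e
  linarith

lemma NN_sort {n : ℕ} (η : Fin n → ℕ) : NN (sortDesc n η) = NN η :=
  NN_perm η (Fin.revPerm.trans (Tuple.sort η))

lemma sort_anti {n : ℕ} (η : Fin n → ℕ) : Antitone (sortDesc n η) := by
  intro i j hij
  exact Tuple.monotone_sort η (Fin.rev_le_rev.mpr hij)

lemma prec_cases {n : ℕ} {ν η : Fin n → ℕ} (h : prec n ν η) :
    NN ν < NN η ∨ (NN ν = NN η ∧ domLT n ν η) := by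
  rcases h with h | ⟨h1, h2⟩
  · left
    have := dom_NN (sort_anti ν) h
    rwa [NN_sort, NN_sort] at this
  · right
    exact ⟨by rw [← NN_sort ν, h1, NN_sort], h2⟩

lemma not_dom_sw {n k : ℕ} (hk : k + 1 < n) {η : Fin n → ℕ} (h : η (pb hk) < η (pa hk)) :
    ¬ domLT n η (η ∘ sw hk) := by
  rintro ⟨⟨_, h1⟩, _⟩
  have h2 := h1 (pa hk)
  have : ∑ i ∈ univ.filter (· ≤ pa hk), (η ∘ sw hk) i < ∑ i ∈ univ.filter (· ≤ pa hk), η i := by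
    refine Finset.sum_lt_sum ?_ ⟨pa hk, by simp, by simpa [sw_a] using h⟩
    intro i hi
    rw [mem_filter] at hi
    by_cases e : i = pa hk
    · subst e; simp [sw_a, h.le]
    · have : i ≠ pb hk := by
        rintro rfl
        exact absurd (pa_lt_pb hk) (not_lt.mpr hi.2)
      simp [sw_of_ne hk e this]
  omega

lemma legCo_inj {n : ℕ} (η : Fin n → ℕ) (h : Function.Injective η) (i : Fin n) :
    legCo n η i = (univ.filter fun k => η i < η k).card := by
  rw [legCo, ← card_union_of_disjoint]
  · congr 1
    ext k
    simp only [mem_union, mem_filter, mem_univ, true_and]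
    constructor
    · rintro (⟨h1, h2⟩ | ⟨h1, h2⟩)
      · exact lt_of_le_of_ne h2 (fun e => h1.ne' (h e))
      · exact h2
    · intro h2
      rcases lt_trichotomy k i with h1 | h1 | h1
      · exact Or.inl ⟨h1, h2.le⟩
      · subst h1; omega
      · exact Or.inr ⟨h1, h2⟩
  · rw [Finset.disjoint_left]
    intro k h1 h2
    rw [mem_filter] at h1 h2
    exact absurd h1.2.1 (not_lt.mpr h2.2.1.le)

lemma legCo_perm {n : ℕ} {κ : Fin n → ℕ} (hκ : StrictAnti κ) (σ : Equiv.Perm (Fin n)) (i : Fin n) :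
    legCo n (fun i => κ (σ⁻¹ i)) i = (σ⁻¹ i : Fin n) := by
  rw [legCo_inj _ (fun a b h => (σ⁻¹).injective (hκ.injective h))]
  have : (univ.filter fun k => κ (σ⁻¹ i) < κ (σ⁻¹ k)) = (Finset.Iio (σ⁻¹ i)).map σ.toEmbedding := by
    ext k
    simp only [mem_filter, mem_univ, true_and, hκ.lt_iff_gt, mem_map_equiv, mem_Iio]
    rfl
  rw [this, card_map]
  simp


/-- contribution of row k to the leg -/
def lg {n : ℕ} (η : Fin n → ℕ) (i : Fin n) (j : ℕ) (k : Fin n) : ℕ :=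
  (if i < k ∧ j ≤ η k ∧ η k ≤ η i then 1 else 0) +
  (if k < i ∧ j ≤ η k + 1 ∧ η k + 1 ≤ η i then 1 else 0)

lemma leg_eq {n : ℕ} (η : Fin n → ℕ) (i : Fin n) (j : ℕ) : leg n η i j = ∑ k, lg η i j k := by
  simp only [leg, lg, Finset.sum_add_distrib, Finset.card_filter]

lemma sw_lt_iff {n k : ℕ} (hk : k + 1 < n) {i j : Fin n} (h2 : ¬ (i = pa hk ∧ j = pb hk))
    (h3 : ¬ (i = pb hk ∧ j = pa hk)) : sw hk i < sw hk j ↔ i < j := by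
  constructor
  · intro h
    have := sw_lt hk h (by
      rintro ⟨e1, e2⟩
      refine h3 ⟨?_, ?_⟩
      · rw [← sw_sw hk i, e1, sw_a]
      · rw [← sw_sw hk j, e2, sw_b])
    rwa [sw_sw, sw_sw] at this
  · exact fun h => sw_lt hk h h2

lemma lg_sw {n k : ℕ} (hk : k + 1 < n) (η : Fin n → ℕ) (h : η (pb hk) < η (pa hk)) (i l : Fin n)
    (j : ℕ) (hj : ¬ (i = pa hk ∧ l = pb hk ∧ j = η (pb hk) + 1)) :
    lg (η ∘ sw hk) (sw hk i) j (sw hk l) = lg η i j l := by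
  have hab := pa_lt_pb hk
  have hba := not_lt.mpr hab.le
  simp only [lg, Function.comp, sw_sw]
  by_cases c1 : i = pa hk ∧ l = pb hk
  · obtain ⟨rfl, rfl⟩ := c1
    have : j ≠ η (pb hk) + 1 := fun e => hj ⟨rfl, rfl, e⟩
    rw [sw_a, sw_b]
    simp only [hab, hba, false_and, true_and, if_false]
    split_ifs <;> omega
  by_cases c2 : i = pb hk ∧ l = pa hk
  · obtain ⟨rfl, rfl⟩ := c2
    rw [sw_a, sw_b]
    simp only [hab, hba, false_and, true_and, if_false]
    split_ifs <;> omega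
  simp only [sw_lt_iff hk c1 c2, sw_lt_iff hk (fun e => c2 ⟨e.2, e.1⟩) (fun e => c1 ⟨e.2, e.1⟩)]

lemma leg_sw {n k : ℕ} (hk : k + 1 < n) (η : Fin n → ℕ) (h : η (pb hk) < η (pa hk)) (i : Fin n)
    (j : ℕ) (hj : ¬ (i = pa hk ∧ j = η (pb hk) + 1)) :
    leg n (η ∘ sw hk) (sw hk i) j = leg n η i j := by
  rw [leg_eq, leg_eq, ← Equiv.sum_comp (sw hk)]
  exact Finset.sum_congr rfl fun l _ => lg_sw hk η h i l j (fun e => hj ⟨e.1, e.2.2⟩)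

lemma leg_sw' {n k : ℕ} (hk : k + 1 < n) (η : Fin n → ℕ) (h : η (pb hk) < η (pa hk)) :
    leg n (η ∘ sw hk) (sw hk (pa hk)) (η (pb hk) + 1) = leg n η (pa hk) (η (pb hk) + 1) + 1 := by
  have hab := pa_lt_pb hk
  have hba := not_lt.mpr hab.le
  rw [leg_eq, leg_eq, ← Equiv.sum_comp (sw hk), ← Finset.add_sum_erase _ _ (mem_univ (pb hk)),
    ← Finset.add_sum_erase univ (lg η (pa hk) (η (pb hk) + 1)) (mem_univ (pb hk))]
  rw [Finset.sum_congr rfl (g := lg η (pa hk) (η (pb hk) + 1)) (fun l hl =>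
    lg_sw hk η h (pa hk) l _ (fun e => (Finset.ne_of_mem_erase hl) e.2.1))]
  have e1 : lg (η ∘ sw hk) (sw hk (pa hk)) (η (pb hk) + 1) (sw hk (pb hk)) = 1 := by
    simp only [lg, Function.comp, sw_sw]
    rw [sw_a, sw_b]
    simp only [hab, hba, false_and, true_and, if_false]
    rw [if_pos ⟨le_rfl, h⟩]
  have e2 : lg η (pa hk) (η (pb hk) + 1) (pb hk) = 0 := by
    simp only [lg]
    simp [hba]
  rw [e1, e2, zero_add, add_comm]

lemma leg_val {n k : ℕ} (hk : k + 1 < n) (η : Fin n → ℕ) (hη : Function.Injective η)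
    (h : η (pb hk) < η (pa hk)) :
    legCo n η (pb hk) = legCo n η (pa hk) + leg n η (pa hk) (η (pb hk) + 1) + 1 := by
  rw [legCo_inj η hη, legCo_inj η hη, leg_eq, Finset.card_filter, Finset.card_filter,
    ← Finset.sum_add_distrib, ← Finset.add_sum_erase univ _ (mem_univ (pa hk)),
    ← Finset.add_sum_erase univ (fun l => (if η (pa hk) < η l then 1 else 0) +
      lg η (pa hk) (η (pb hk) + 1) l) (mem_univ (pa hk))]
  have e : ∀ l ∈ univ.erase (pa hk), (if η (pb hk) < η l then 1 else 0) =
      (if η (pa hk) < η l then 1 else 0) + lg η (pa hk) (η (pb hk) + 1) l := by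
    intro l hl
    have hl := Finset.ne_of_mem_erase hl
    have hne : η l ≠ η (pa hk) := fun e => hl (hη e)
    simp only [lg]
    rcases lt_or_gt_of_ne hl with hlt | hlt
    · have hne2 : η l ≠ η (pb hk) := fun e => by
        have := hη e
        subst this
        exact absurd (pa_lt_pb hk) (not_lt.mpr hlt.le)
      simp only [hlt, not_lt.mpr hlt.le, false_and, true_and, if_false]
      split_ifs <;> omega
    · simp only [hlt, not_lt.mpr hlt.le, false_and, true_and, if_false]
      split_ifs <;> omega
  rw [Finset.sum_congr rfl e]
  simp [lg, h]
  omega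

lemma dP_ne {n : ℕ} (η : Fin n → ℕ) : dP n η ≠ 0 := by
  rw [dP]
  refine Finset.prod_ne_zero_iff.mpr fun i _ => Finset.prod_ne_zero_iff.mpr fun j _ => ?_
  exact one_sub_ne (by omega)

lemma dP_sw {n k : ℕ} (hk : k + 1 < n) (η : Fin n → ℕ)
    (h : η (pb hk) < η (pa hk)) :
    dP n (η ∘ sw hk) * (1 - q ^ (η (pa hk) - η (pb hk)) *
      t ^ (leg n η (pa hk) (η (pb hk) + 1) + 1)) =
    dP n η * (1 - t * (q ^ (η (pa hk) - η (pb hk)) *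
      t ^ (leg n η (pa hk) (η (pb hk) + 1) + 1))) := by
  rw [dP, dP, ← Equiv.prod_comp (sw hk), ← Finset.mul_prod_erase univ _ (mem_univ (pa hk)),
    ← Finset.mul_prod_erase univ (fun i => ∏ j ∈ Finset.Icc 1 (η i),
      (1 - q ^ (η i - j + 1) * t ^ (leg n η i j + 1))) (mem_univ (pa hk))]
  simp only [Function.comp_apply, sw_sw]
  have e1 : ∏ i ∈ univ.erase (pa hk), ∏ j ∈ Finset.Icc 1 (η i),
      (1 - q ^ (η i - j + 1) * t ^ (leg n (η ∘ sw hk) (sw hk i) j + 1)) =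
      ∏ i ∈ univ.erase (pa hk), ∏ j ∈ Finset.Icc 1 (η i),
      (1 - q ^ (η i - j + 1) * t ^ (leg n η i j + 1)) := by
    refine Finset.prod_congr rfl fun i hi => Finset.prod_congr rfl fun j _ => ?_
    rw [leg_sw hk η h i j (fun e => (Finset.ne_of_mem_erase hi) e.1)]
  have hmem : η (pb hk) + 1 ∈ Finset.Icc 1 (η (pa hk)) := by
    rw [mem_Icc]; omega
  rw [e1, ← Finset.mul_prod_erase _ _ hmem, ← Finset.mul_prod_erase (Finset.Icc 1 (η (pa hk)))
    (fun j => 1 - q ^ (η (pa hk) - j + 1) * t ^ (leg n η (pa hk) j + 1)) hmem]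
  have e2 : ∏ j ∈ (Finset.Icc 1 (η (pa hk))).erase (η (pb hk) + 1),
      (1 - q ^ (η (pa hk) - j + 1) * t ^ (leg n (η ∘ sw hk) (sw hk (pa hk)) j + 1)) =
      ∏ j ∈ (Finset.Icc 1 (η (pa hk))).erase (η (pb hk) + 1),
      (1 - q ^ (η (pa hk) - j + 1) * t ^ (leg n η (pa hk) j + 1)) := by
    refine Finset.prod_congr rfl fun j hj => ?_
    rw [leg_sw hk η h _ j (fun e => (Finset.ne_of_mem_erase hj) e.2)]
  rw [e2, leg_sw' hk η h]
  have e3 : η (pa hk) - (η (pb hk) + 1) + 1 = η (pa hk) - η (pb hk) := by omega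
  rw [e3]
  ring


lemma legCo_sw {n k : ℕ} (hk : k + 1 < n) (η : Fin n → ℕ) (hη : Function.Injective η) (i : Fin n) :
    legCo n (η ∘ sw hk) i = legCo n η (sw hk i) := by
  rw [legCo_inj _ hη, legCo_inj _ (hη.comp (sw hk).injective), Finset.card_filter,
    Finset.card_filter, ← Equiv.sum_comp (sw hk) (fun l => if η (sw hk i) < η l then 1 else 0)]
  rfl

lemma BT {n : ℕ} {T : ℕ → P n →ₗ[K] P n} (hT : IsDL n t T) {k : ℕ} (hk : k + 1 < n) (f : P n) :
    Yop n q t T (pb hk) (T k f) =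
      T k (Yop n q t T (pa hk) f) - (t - 1) • Yop n q t T (pa hk) f := by
  have ht := t_ne
  have h := congrArg (Tinv n t T k) (Y_rel hT hk f)
  rw [Tinv_T hT hk] at h
  rw [h, map_smul]
  simp only [Tinv, LinearMap.add_apply, LinearMap.sub_apply, LinearMap.smul_apply,
    LinearMap.id_apply]
  generalize Yop n q t T (pa hk) f = g
  rw [smul_add, smul_sub, smul_smul, smul_smul, mul_inv_cancel₀ ht, sub_smul]
  simp only [one_smul]
  abel

lemma AT {n : ℕ} {T : ℕ → P n →ₗ[K] P n} (hT : IsDL n t T) {k : ℕ} (hk : k + 1 < n) (f : P n) :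
    Yop n q t T (pa hk) (T k f) =
      (t - 1) • Yop n q t T (pa hk) f + T k (Yop n q t T (pb hk) f) := by
  have ht := t_ne
  have h := Y_rel hT hk (T k f)
  rw [T_quad hT hk, map_add, map_add, map_smul, map_smul, map_smul, map_smul, Y_rel hT hk] at h
  apply smul_right_injective (P n) ht
  simp only
  rw [← h, smul_add, smul_comm]

lemma T_pair {n : ℕ} {T : ℕ → P n →ₗ[K] P n} (hT : IsDL n t T) {k : ℕ} (hk : k + 1 < n)
    (η : Fin n → ℕ) (hη : Function.Injective η) (h : η (pb hk) < η (pa hk)) (e e' : P n)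
    (he : IsNSMac n q t T η e) (he' : IsNSMac n q t T (η ∘ sw hk) e') (z : K)
    (hz : z = q ^ (η (pa hk) - η (pb hk)) * t ^ (leg n η (pa hk) (η (pb hk) + 1) + 1)) :
    T k e' = t • e - ((t - 1) / (z - 1)) • e' := by
  have ht := t_ne
  have hz1 : z - 1 ≠ 0 := by
    rw [hz]; intro hc
    exact one_sub_ne (a := η (pa hk) - η (pb hk)) (b := leg n η (pa hk) (η (pb hk) + 1) + 1)
      (by omega) (by linear_combination -hc)
  obtain ⟨c1, c2, c3⟩ := he
  obtain ⟨c1', c2', c3'⟩ := he'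
  have hyz : q ^ η (pa hk) / t ^ legCo n η (pa hk) = z * (q ^ η (pb hk) / t ^ legCo n η (pb hk)) := by
    rw [leg_val hk η hη h, hz]
    have e1 : q ^ η (pa hk) = q ^ (η (pa hk) - η (pb hk)) * q ^ η (pb hk) := by
      rw [← pow_add]; congr 1; omega
    rw [e1, add_assoc, pow_add]
    field_simp
    ring
  have cA := c3' (pa hk)
  have cB := c3' (pb hk)
  rw [legCo_sw hk η hη, Function.comp_apply, sw_a] at cA
  rw [legCo_sw hk η hη, Function.comp_apply, sw_b, hyz] at cB
  generalize hyb : q ^ η (pb hk) / t ^ legCo n η (pb hk) = y at *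
  have hd : T k e' + ((t - 1) / (z - 1)) • e' - t • e = 0 := by
    apply eig_unique hT η
    · intro i
      have hei := c3 i
      rw [map_sub, map_add, map_smul, map_smul, hei]
      by_cases i1 : i = pa hk
      · subst i1
        rw [AT hT hk, cA, cB, hyz, map_smul]
        simp only [smul_eq_C_mul]
        have hC : (C ((t - 1) / (z - 1)) * (C z - 1) : P n) = C t - 1 := by
          rw [← C_1, ← C_sub, ← C_mul, ← C_sub, div_mul_cancel₀ _ hz1]
        simp only [C_sub, C_mul, C_1]
        linear_combination (- C y * e') * hC
      by_cases i2 : i = pb hk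
      · subst i2
        rw [BT hT hk, cA, cB, hyb, map_smul]
        simp only [smul_eq_C_mul]
        have hC : (C ((t - 1) / (z - 1)) * (C z - 1) : P n) = C t - 1 := by
          rw [← C_1, ← C_sub, ← C_mul, ← C_sub, div_mul_cancel₀ _ hz1]
        simp only [C_sub, C_mul, C_1]
        linear_combination (C y * e') * hC
      have ci := c3' i
      rw [legCo_sw hk η hη, Function.comp_apply, sw_of_ne hk i1 i2] at ci
      rw [← Y_comm hT hk i i1 i2, ci, map_smul, smul_sub, smul_add]
      congr 1
      · congr 1
        rw [smul_comm]
      · rw [smul_comm]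
    · have hN : ∀ ρ, cf e' ρ ≠ 0 → NN ρ ≤ NN η := by
        intro ρ hρ
        rw [← NN_perm η (sw hk)]
        rcases c2' _ hρ with h1 | h1
        · rw [← h1]; rfl
        · rcases prec_cases h1 with h2 | h2
          · exact h2.le
          · exact h2.1.le
      have h0 : cf e' η = 0 := by
        by_contra hc
        rcases c2' _ hc with h1 | h1
        · have := congrFun h1 (pa hk)
          simp [sw_a] at this
          omega
        · rcases prec_cases h1 with h2 | h2
          · rw [NN_perm] at h2
            exact lt_irrefl _ h2
          · exact not_dom_sw hk h h2.2
      have e1 : cf e' (η ∘ sw hk) = 1 := c1'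
      have e2 : cf e η = 1 := c1
      rw [cf_sub, cf_add, cf_smul, cf_smul, cf_T hT hk _ _ hN, if_neg (by omega), h0, e1, e2]
      ring
  linear_combination hd

lemma pair_cancel {n : ℕ} {T : ℕ → P n →ₗ[K] P n} (hT : IsDL n t T) {k : ℕ} (hk : k + 1 < n)
    (η : Fin n → ℕ) (hη : Function.Injective η) (h : η (pb hk) < η (pa hk)) (e e' : P n)
    (he : IsNSMac n q t T η e) (he' : IsNSMac n q t T (η ∘ sw hk) e') (r r' : K)
    (hr : dP n η * (t * r') = - (dP n (η ∘ sw hk) * r)) :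
    (T k (r • e) + r • e) + (T k (r' • e') + r' • e') = 0 := by
  have ht := t_ne
  set z := q ^ (η (pa hk) - η (pb hk)) * t ^ (leg n η (pa hk) (η (pb hk) + 1) + 1) with hz
  have hz1 : 1 - z ≠ 0 := one_sub_ne (by omega)
  have hz2 : z - 1 ≠ 0 := fun hc => hz1 (by linear_combination -hc)
  have h1 := T_pair hT hk η hη h e e' he he' z hz
  have h2 := dP_sw hk η h
  rw [← hz] at h2
  have hd := dP_ne η
  set c := (t - 1) / (z - 1) with hc
  have hcz : c * (z - 1) = t - 1 := div_mul_cancel₀ _ hz2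
  have hrc : t * r' = - (t + c) * r := by
    apply mul_left_cancel₀ (mul_ne_zero hd hz1)
    linear_combination (1 - z) * hr - r * h2 - dP n η * r * hcz
  have h3 := T_quad hT hk e'
  rw [h1, map_sub, map_smul, map_smul, h1] at h3
  rw [map_smul, map_smul, h1]
  have hC : (C t * C r' : P n) = - (C t + C c) * C r := by
    rw [← C_add, ← C_neg, ← C_mul, ← C_mul, hrc]
  apply smul_right_injective (P n) ht
  simp only [smul_eq_C_mul, C_sub, C_1] at h3 ⊢
  linear_combination C r * h3 + (C t * e + (1 - C c) * e') * hC

lemma main_result {n : ℕ} (κ : Fin n → ℕ) (hκ : StrictAnti κ)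
    (T : ℕ → P n →ₗ[K] P n) (hT : IsDL n t T)
    (Tw : Equiv.Perm (Fin n) → P n →ₗ[K] P n) (hTw : IsTsigma n T Tw)
    (E : Equiv.Perm (Fin n) → P n)
    (hE : ∀ σ : Equiv.Perm (Fin n), IsNSMac n q t T (fun i => κ (σ⁻¹ i)) (E σ))
    (S : P n) (hS : IsQASMac n q t T Tw κ S) :
    S = ∑ σ : Equiv.Perm (Fin n),
      (((-t) ^ inversions σ)⁻¹ * (dP n (fun i => κ (σ⁻¹ i)) / dP n κ)) • E σ := by
  have ht := t_ne
  obtain ⟨s1, ⟨v, s2⟩, s3⟩ := hS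
  have hinj : ∀ σ : Equiv.Perm (Fin n), Function.Injective (fun i => κ (σ⁻¹ i)) :=
    fun σ a b hab => (σ⁻¹).injective (hκ.injective hab)
  set r : Equiv.Perm (Fin n) → K := fun σ =>
    ((-t) ^ inversions σ)⁻¹ * (dP n (fun i => κ (σ⁻¹ i)) / dP n κ) with hr
  have e0 : ∀ {k : ℕ} (hk : k + 1 < n) (σ : Equiv.Perm (Fin n)),
      (fun i => κ ((sw hk * σ)⁻¹ i)) = (fun i => κ (σ⁻¹ i)) ∘ sw hk := by
    intro k hk σ
    funext i
    rw [mul_inv_rev]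
    rfl
  have hpair : ∀ {k : ℕ} (hk : k + 1 < n) (σ : Equiv.Perm (Fin n)), σ⁻¹ (pa hk) < σ⁻¹ (pb hk) →
      (T k (r σ • E σ) + r σ • E σ) +
      (T k (r (sw hk * σ) • E (sw hk * σ)) + r (sw hk * σ) • E (sw hk * σ)) = 0 := by
    intro k hk σ hσ
    have hE' := hE (sw hk * σ)
    rw [e0 hk σ] at hE'
    refine pair_cancel hT hk _ (hinj σ) (hκ hσ) _ _ (hE σ) hE' _ _ ?_
    have hl : inversions (sw hk * σ) = inversions σ + 1 := by
      rw [← invs_inv, mul_inv_rev, ← invs_inv σ]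
      exact inv_mul_sw hk σ⁻¹ hσ
    simp only [hr]
    rw [hl, e0 hk σ, pow_succ]
    have hd := dP_ne κ
    have hnt : (-t) ≠ 0 := neg_ne_zero.mpr ht
    have hp : (-t) ^ inversions σ ≠ 0 := pow_ne_zero _ hnt
    field_simp
  have hTR : ∀ k, k + 1 < n → T k (∑ σ, r σ • E σ) = - ∑ σ, r σ • E σ := by
    intro k hk
    have hsum : ∑ σ : Equiv.Perm (Fin n), (T k (r σ • E σ) + r σ • E σ) = 0 := by
      have hss : ∀ σ : Equiv.Perm (Fin n), sw hk * (sw hk * σ) = σ := by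
        intro σ; ext i; simp [sw_sw]
      refine Finset.sum_involution (fun σ _ => sw hk * σ) ?_ ?_ ?_ ?_
      · intro σ _
        rcases lt_trichotomy (σ⁻¹ (pa hk)) (σ⁻¹ (pb hk)) with h | h | h
        · exact hpair hk σ h
        · exact absurd ((σ⁻¹).injective h) (pa_ne_pb hk)
        · have h2 := hpair hk (sw hk * σ) (by
            rw [mul_inv_rev]
            change σ⁻¹ ((sw hk).symm (pa hk)) < σ⁻¹ ((sw hk).symm (pb hk))
            rw [sw_symm, sw_a, sw_b]; exact h)
          rw [hss] at h2
          rw [add_comm]; exact h2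
      · intro σ _ _ hc
        have h2 := congrArg (fun τ : Equiv.Perm (Fin n) => τ (σ⁻¹ (pa hk))) hc
        simp [sw_a] at h2
        exact pa_ne_pb hk h2.symm
      · intro σ _; exact mem_univ _
      · intro σ _; exact hss σ
    rw [Finset.sum_add_distrib, ← map_sum] at hsum
    exact eq_neg_of_add_eq_zero_left hsum
  have hYR : (∑ i : Fin n, Yop n q t T i) (∑ σ, r σ • E σ) =
      (∑ i : Fin n, q ^ κ i / t ^ (i : ℕ)) • ∑ σ, r σ • E σ := by
    rw [map_sum, Finset.smul_sum]
    refine Finset.sum_congr rfl fun σ _ => ?_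
    rw [map_smul, smul_comm, LinearMap.sum_apply]
    congr 1
    rw [← Equiv.sum_comp (σ⁻¹ : Equiv.Perm (Fin n)) (fun i : Fin n => q ^ κ i / t ^ (i : ℕ)),
      Finset.sum_smul]
    refine Finset.sum_congr rfl fun i _ => ?_
    rw [(hE σ).2.2 i, legCo_perm hκ]
  have hcR : cf (∑ σ, r σ • E σ) κ = 1 := by
    rw [cf_sum, Finset.sum_eq_single 1]
    · have h1 : cf (E 1) κ = 1 := (hE 1).1
      have h2 : r 1 = 1 := by
        simp only [hr, invs_one, pow_zero, inv_one, one_mul]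
        exact div_self (dP_ne κ)
      rw [cf_smul, h1, h2, one_mul]
    · intro σ _ hσ
      rw [cf_smul]
      have : cf (E σ) κ = 0 := by
        by_contra hc
        rcases (hE σ).2.1 _ hc with h1 | h1
        · exact hσ (inv_eq_one.mp (comp_perm_inj hκ (σ := σ⁻¹) h1))
        · have hN : NN (fun i => κ (σ⁻¹ i)) = NN κ := NN_perm κ σ⁻¹
          rcases prec_cases h1 with h2 | h2
          · rw [hN] at h2
            exact lt_irrefl _ h2
          · have h3 := dom_NN hκ.antitone h2.2
            rw [hN] at h3
            exact lt_irrefl _ h3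
      rw [this, mul_zero]
    · simp
  have hcS : cf S κ = 1 := by
    rw [s2, cf_add, cf_Uminus_self hT hTw hκ]
    have : cf (∑ᶠ μ ∈ {μ : Fin n → ℕ | StrictAnti μ ∧ domLT n μ κ},
        v μ • Uminus n t Tw (xmon n μ)) κ = 0 := by
      refine finsum_mem_induction (fun x : P n => cf x κ = 0) (cf_zero κ) ?_ ?_
      · intro x y hx hy
        rw [cf_add, hx, hy, add_zero]
      · intro μ hμ
        rw [cf_smul, cf_Uminus_lt hT hTw hκ (dom_NN hμ.1.antitone hμ.2), mul_zero]
    rw [this, add_zero]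
  have hzero : S - ∑ σ, r σ • E σ = 0 := by
    apply anti_unique hT κ
    · intro k hk
      rw [map_sub, s1 k hk, hTR k hk]
      abel
    · rw [map_sub, s3, hYR, smul_sub]
      simp only [div_eq_mul_inv]
    · rw [cf_sub, hcS, hcR, sub_self]
  exact sub_eq_zero.mp hzero

theorem stmt_8 (n : ℕ) (κ : Fin n → ℕ) (hκ : StrictAnti κ)
    (T : ℕ → P n →ₗ[K] P n) (hT : IsDL n t T)
    (Tw : Equiv.Perm (Fin n) → P n →ₗ[K] P n) (hTw : IsTsigma n T Tw)
    (E : Equiv.Perm (Fin n) → P n)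
    (hE : ∀ σ : Equiv.Perm (Fin n), IsNSMac n q t T (fun i => κ (σ⁻¹ i)) (E σ))
    (S : P n) (hS : IsQASMac n q t T Tw κ S) :
    S = ∑ σ : Equiv.Perm (Fin n),
      (((-t) ^ inversions σ)⁻¹ * (dP n (fun i => κ (σ⁻¹ i)) / dP n κ)) • E σ := by
  exact main_result κ hκ T hT Tw hTw E hE S hS
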